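/- arXiv:2101.04986 — 2 statements merged into one kernel-verified Lean document; each statement's English description precedes it below -/
import Mathlib

section
/- Let X₁, X₂ be Polish metric spaces, C : X₁ × 𝒫(X₂) → (−∞,+∞] lower semi-continuous, bounded from below, with C(x₁,·) convex for every x₁, and F₁, F₂ admissible entropy functions. If Λ_ET^< is nonempty, then for every μ₁ ∈ ℳ(X₁), μ₂ ∈ ℳ(X₂): sup_{(φ₁,φ₂)∈Λ_ET} Σ_{i=1}^2 ∫_{X_i} φ_i dμ_i = sup_{(φ₁,φ₂)∈Λ_ET^<} Σ_{i=1}^2 ∫_{X_i} φ_i dμ_i. -/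
open MeasureTheory Filter Set Topology
open scoped ENNReal NNReal BoundedContinuousFunction

noncomputable section

/-- The "positive part" of an extended real number, as an element of `ℝ≥0∞`. -/
def posE (a : EReal) : ℝ≥0∞ := if a = ⊤ then ⊤ else ENNReal.ofReal a.toReal

/-- Integral of an `EReal`-valued function: positive part minus negative part
(in `EReal`, so that it is always defined). -/
def eIntegral {α : Type*} [MeasurableSpace α] (μ : Measure α) (f : α → EReal) : EReal :=
  ((∫⁻ x, posE (f x) ∂μ : ℝ≥0∞) : EReal) - ((∫⁻ x, posE (-(f x)) ∂μ : ℝ≥0∞) : EReal)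

/-- The recession constant `lim_{s→∞} G(s)/s` (as a `limsup`, which coincides with the
limit for convex functions). -/
def recessionOf (G : ℝ → ℝ≥0∞) : ℝ≥0∞ :=
  Filter.limsup (fun s : ℝ => G s / ENNReal.ofReal s) Filter.atTop

/-- An admissible entropy function: a convex, lower semicontinuous function
`F : [0,∞) → [0,∞]` which is finite at some positive point. -/
structure EntropyFn where
  F : ℝ → ℝ≥0∞
  convex' : ∀ a ∈ Ici (0:ℝ), ∀ b ∈ Ici (0:ℝ), ∀ t : ℝ, 0 ≤ t → t ≤ 1 →
    F (t * a + (1 - t) * b) ≤ ENNReal.ofReal t * F a + ENNReal.ofReal (1 - t) * F b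
  lsc : LowerSemicontinuousOn F (Ici (0:ℝ))
  dom : ∃ s : ℝ, 0 < s ∧ F s ≠ ∞

namespace EntropyFn

/-- The recession constant `F'_∞ = lim_{s→∞} F(s)/s`. -/
def recC (F : EntropyFn) : ℝ≥0∞ := recessionOf F.F

/-- `F` is superlinear if `F'_∞ = ∞`. -/
def Superlinear (F : EntropyFn) : Prop := F.recC = ∞

/-- `F°(φ) := inf_{s ≥ 0} (φ·s + F(s))`, extended to `EReal` arguments. -/
def circ (F : EntropyFn) (φ : EReal) : EReal :=
  ⨅ s : Ici (0:ℝ), φ * ((s : ℝ) : EReal) + ((F.F (s : ℝ) : ℝ≥0∞) : EReal)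

/-- The (interior of the) domain of `F°` is taken inside the set where `F°` is not `-∞`. -/
def circDom (F : EntropyFn) : Set ℝ := {φ : ℝ | F.circ (φ : EReal) ≠ ⊥}

/-- The reverse entropy function `R(r) = r·F(1/r)` for `r > 0`, with `R(0) = F'_∞`. -/
def revF (F : EntropyFn) (r : ℝ) : ℝ≥0∞ :=
  if 0 < r then ENNReal.ofReal r * F.F (1 / r) else F.recC

/-- The Legendre conjugate `R*(ψ) = sup_{s ≥ 0} (s·ψ − R(s))` of the reverse function. -/
def revConj (F : EntropyFn) (ψ : ℝ) : EReal :=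
  ⨆ s : Ici (0:ℝ), (((s : ℝ) * ψ : ℝ) : EReal) - ((F.revF (s : ℝ) : ℝ≥0∞) : EReal)

end EntropyFn

/-- The entropy functional `ℱ(γ|μ) = ∫ F(dγ/dμ) dμ + F'_∞ · γ^⊥(X)`, where
`γ = (dγ/dμ)·μ + γ^⊥` is the Lebesgue decomposition of `γ` with respect to `μ`. -/
def entF {X : Type*} [MeasurableSpace X] (F : EntropyFn) (γ μ : Measure X) : ℝ≥0∞ :=
  (∫⁻ x, F.F ((γ.rnDeriv μ x).toReal) ∂μ) + F.recC * (γ.singularPart μ) Set.univ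

/-- The reverse entropy functional `ℛ(μ|γ) = ∫ R(dμ/dγ) dγ + R'_∞ · μ^⊥(X)`. -/
def revEntF {X : Type*} [MeasurableSpace X] (F : EntropyFn) (μ γ : Measure X) : ℝ≥0∞ :=
  (∫⁻ x, F.revF ((μ.rnDeriv γ x).toReal) ∂γ) + recessionOf F.revF * (μ.singularPart γ) Set.univ

section WOET

variable {X₁ X₂ : Type*} [MeasurableSpace X₁] [MeasurableSpace X₂]

/-- The weak entropy-transport cost
`ℰ_C(γ|μ₁,μ₂) = ℱ₁(γ₁|μ₁) + ℱ₂(γ₂|μ₂) + ∫ C(x₁, γ_{x₁}) dγ₁(x₁)`. -/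
def wCost [StandardBorelSpace X₂] [Nonempty X₂]
    (C : X₁ → ProbabilityMeasure X₂ → EReal) (F₁ F₂ : EntropyFn)
    (μ₁ : Measure X₁) (μ₂ : Measure X₂)
    (γ : Measure (X₁ × X₂)) (hγ : IsFiniteMeasure γ) : EReal :=
  haveI := hγ
  ((entF F₁ γ.fst μ₁ : ℝ≥0∞) : EReal) + ((entF F₂ γ.snd μ₂ : ℝ≥0∞) : EReal) +
    eIntegral γ.fst (fun x₁ => C x₁ ⟨γ.condKernel x₁, inferInstance⟩)

/-- The weak optimal entropy-transport value `ℰ_C(μ₁,μ₂)`. -/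
def wOpt [StandardBorelSpace X₂] [Nonempty X₂]
    (C : X₁ → ProbabilityMeasure X₂ → EReal) (F₁ F₂ : EntropyFn)
    (μ₁ : Measure X₁) (μ₂ : Measure X₂) : EReal :=
  sInf { e : EReal | ∃ (γ : Measure (X₁ × X₂)) (hγ : IsFiniteMeasure γ),
    e = wCost C F₁ F₂ μ₁ μ₂ γ hγ }

variable [TopologicalSpace X₁] [TopologicalSpace X₂]

/-- The dual feasible set `Λ`. -/
def lamSet (C : X₁ → ProbabilityMeasure X₂ → EReal) (F₁ F₂ : EntropyFn) :
    Set ((X₁ →ᵇ ℝ) × (X₂ →ᵇ ℝ)) :=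
  { φ | (∀ x, φ.1 x ∈ interior F₁.circDom) ∧ (∀ x, φ.2 x ∈ interior F₂.circDom) ∧
      ∀ (x₁ : X₁) (p : ProbabilityMeasure X₂),
        ((φ.1 x₁ + ∫ x₂, φ.2 x₂ ∂(p : Measure X₂) : ℝ) : EReal) ≤ C x₁ p }

/-- The dual feasible set `Λ_R`. -/
def lamRSet (C : X₁ → ProbabilityMeasure X₂ → EReal) (F₁ F₂ : EntropyFn) :
    Set ((X₁ →ᵇ ℝ) × (X₂ →ᵇ ℝ)) :=
  { φ | (∃ b : ℝ, ((b : ℝ) : EReal) < ((F₁.F 0 : ℝ≥0∞) : EReal) ∧ ∀ x, φ.1 x ≤ b) ∧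
        (∃ b : ℝ, ((b : ℝ) : EReal) < ((F₂.F 0 : ℝ≥0∞) : EReal) ∧ ∀ x, φ.2 x ≤ b) ∧
        ∀ (x₁ : X₁) (p : ProbabilityMeasure X₂),
          F₁.revConj (φ.1 x₁) + eIntegral (p : Measure X₂) (fun x₂ => F₂.revConj (φ.2 x₂))
            ≤ C x₁ p }

/-- The dual feasible set `Λ_ET` (constraints tested against all pairs of nonnegative finite
measures; on all other signed measures `ET = +∞`, so those constraints are vacuous). -/
def lamETSet [StandardBorelSpace X₂] [Nonempty X₂]
    (C : X₁ → ProbabilityMeasure X₂ → EReal) (F₁ F₂ : EntropyFn) :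
    Set ((X₁ →ᵇ ℝ) × (X₂ →ᵇ ℝ)) :=
  { φ | ∀ (μ₁ : Measure X₁) (μ₂ : Measure X₂), IsFiniteMeasure μ₁ → IsFiniteMeasure μ₂ →
      (((∫ x, φ.1 x ∂μ₁) + ∫ x, φ.2 x ∂μ₂ : ℝ) : EReal) ≤ wOpt C F₁ F₂ μ₁ μ₂ }

/-- The set `Λ_ET^<`. -/
def lamETltSet [StandardBorelSpace X₂] [Nonempty X₂]
    (C : X₁ → ProbabilityMeasure X₂ → EReal) (F₁ F₂ : EntropyFn) :
    Set ((X₁ →ᵇ ℝ) × (X₂ →ᵇ ℝ)) :=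
  { φ ∈ lamETSet C F₁ F₂ |
      (∃ b : ℝ, ((b : ℝ) : EReal) < ((F₁.F 0 : ℝ≥0∞) : EReal) ∧ ∀ x, φ.1 x ≤ b) ∧
      (∃ b : ℝ, ((b : ℝ) : EReal) < ((F₂.F 0 : ℝ≥0∞) : EReal) ∧ ∀ x, φ.2 x ≤ b) }

/-- `R_C φ(x₁) := inf_{p ∈ 𝒫(X₂)} (C(x₁,p) + ∫ φ dp)`. -/
def RCfun (C : X₁ → ProbabilityMeasure X₂ → EReal) (φ : X₂ →ᵇ ℝ) (x₁ : X₁) : EReal :=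
  ⨅ p : ProbabilityMeasure X₂, C x₁ p + ((∫ x₂, φ x₂ ∂(p : Measure X₂) : ℝ) : EReal)

/-- Property (BM) of an admissible entropy function on a space `X`. -/
def HasBM (X : Type*) [TopologicalSpace X] [MeasurableSpace X] (F : EntropyFn) : Prop :=
  ∀ ψ : X →ᵇ ℝ, (∃ b : ℝ, ((b : ℝ) : EReal) < ((F.F 0 : ℝ≥0∞) : EReal) ∧ ∀ x, ψ x ≤ b) →
    ∃ s : X → ℝ, Measurable s ∧ (∃ M : ℝ, ∀ x, |s x| ≤ M) ∧ (∀ x, 0 < s x) ∧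
      ∀ x, ((F.revF (s x) : ℝ≥0∞) : EReal) + F.revConj (ψ x) = ((s x * ψ x : ℝ) : EReal)

end WOET

/-- The functional `ET` extended to pairs of finite signed measures:
it equals `ℰ_C(μ₁,μ₂)` when both arguments are (induced by) nonnegative finite measures,
and `+∞` otherwise. -/
def ETsgn {X₁ X₂ : Type*} [MeasurableSpace X₁] [MeasurableSpace X₂]
    [StandardBorelSpace X₂] [Nonempty X₂]
    (C : X₁ → ProbabilityMeasure X₂ → EReal) (F₁ F₂ : EntropyFn)
    (ν₁ : SignedMeasure X₁) (ν₂ : SignedMeasure X₂) : EReal :=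
  sInf { e : EReal | ∃ (μ₁ : Measure X₁) (h₁ : IsFiniteMeasure μ₁)
      (μ₂ : Measure X₂) (h₂ : IsFiniteMeasure μ₂),
      ν₁ = @Measure.toSignedMeasure X₁ _ μ₁ h₁ ∧ ν₂ = @Measure.toSignedMeasure X₂ _ μ₂ h₂ ∧
      e = wOpt C F₁ F₂ μ₁ μ₂ }

section Martingale

variable {X : Set ℝ}

/-- The martingale condition for a finite measure on `X × X`:
`∫ y dγ_x(y) = x` for `γ₁`-a.e. `x`. -/
def martCond [StandardBorelSpace ↥X] [Nonempty ↥X]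
    (γ : Measure (↥X × ↥X)) (hγ : IsFiniteMeasure γ) : Prop :=
  haveI := hγ
  ∀ᵐ x ∂γ.fst, (∫ y, (y : ℝ) ∂(γ.condKernel x)) = (x : ℝ)

/-- The martingale optimal entropy transport value `ℰ_M(μ₁,μ₂)` (with an `EReal`-valued
cost `c`). -/
def eMart [StandardBorelSpace ↥X] [Nonempty ↥X]
    (c : ↥X → ↥X → EReal) (F₁ F₂ : EntropyFn) (μ₁ μ₂ : Measure ↥X) : EReal :=
  sInf { e : EReal | ∃ (γ : Measure (↥X × ↥X)) (hγ : IsFiniteMeasure γ), martCond γ hγ ∧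
    e = ((entF F₁ γ.fst μ₁ : ℝ≥0∞) : EReal) + ((entF F₂ γ.snd μ₂ : ℝ≥0∞) : EReal) +
        eIntegral γ (fun q => c q.1 q.2) }

/-- The martingale optimal entropy transport value `ℰ_M(μ₁,μ₂)` (with a `[0,∞]`-valued
cost `c`). -/
def eMartNN [StandardBorelSpace ↥X] [Nonempty ↥X]
    (c : ↥X → ↥X → ℝ≥0∞) (F₁ F₂ : EntropyFn) (μ₁ μ₂ : Measure ↥X) : EReal :=
  sInf { e : EReal | ∃ (γ : Measure (↥X × ↥X)) (hγ : IsFiniteMeasure γ), martCond γ hγ ∧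
    e = ((entF F₁ γ.fst μ₁ + entF F₂ γ.snd μ₂ + ∫⁻ q, c q.1 q.2 ∂γ : ℝ≥0∞) : EReal) }

/-- The dual feasible set `Λ_M` for the martingale problem. -/
def lamM (c : ↥X → ↥X → EReal) (F₁ F₂ : EntropyFn) : Set ((↥X →ᵇ ℝ) × (↥X →ᵇ ℝ)) :=
  { φ | (∀ x, φ.1 x ∈ interior F₁.circDom) ∧ (∀ x, φ.2 x ∈ interior F₂.circDom) ∧
      ∃ h : ↥X →ᵇ ℝ, ∀ x₁ x₂ : ↥X,
        ((φ.1 x₁ + φ.2 x₂ + h x₁ * ((x₂ : ℝ) - (x₁ : ℝ)) : ℝ) : EReal) ≤ c x₁ x₂ }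

/-- The perspective function `r·F(θ/r)` with the convention `r·F(θ/r) = θ·F'_∞` for `r = 0`. -/
def perspFn (F : EntropyFn) (r θ : ℝ) : ℝ≥0∞ :=
  if r = 0 then ENNReal.ofReal θ * F.recC else ENNReal.ofReal r * F.F (θ / r)

/-- The homogeneous marginal perspective cost `H(x₁,r₁;x₂,r₂)` (the dependence on
`(x₁,x₂)` is through the value `c = c(x₁,x₂)`). -/
def Hcost (F₁ F₂ : EntropyFn) (c : ℝ≥0∞) (r₁ r₂ : ℝ) : ℝ≥0∞ :=
  if c ≠ ∞ then
    ⨅ θ : Ioi (0:ℝ), perspFn F₁ r₁ (θ : ℝ) + perspFn F₂ r₂ (θ : ℝ) + ENNReal.ofReal (θ : ℝ) * c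
  else F₁.F 0 * ENNReal.ofReal r₁ + F₂.F 0 * ENNReal.ofReal r₂

/-- The functional `ℋ(μ₁,μ₂|γ)`. -/
def hMargFun (F₁ F₂ : EntropyFn) (c : ↥X → ↥X → ℝ≥0∞) (μ₁ μ₂ : Measure ↥X)
    (γ : Measure (↥X × ↥X)) : ℝ≥0∞ :=
  (∫⁻ q, Hcost F₁ F₂ (c q.1 q.2) ((μ₁.rnDeriv γ.fst q.1).toReal)
      ((μ₂.rnDeriv γ.snd q.2).toReal) ∂γ)
    + F₁.F 0 * (μ₁.singularPart γ.fst) Set.univ + F₂.F 0 * (μ₂.singularPart γ.snd) Set.univ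

/-- The functional `ℛ(μ₁,μ₂|γ)`. -/
def rMargFun (F₁ F₂ : EntropyFn) (c : ↥X → ↥X → ℝ≥0∞) (μ₁ μ₂ : Measure ↥X)
    (γ : Measure (↥X × ↥X)) : ℝ≥0∞ :=
  revEntF F₁ μ₁ γ.fst + revEntF F₂ μ₂ γ.snd + ∫⁻ q, c q.1 q.2 ∂γ

/-- The first `p`-homogeneous marginal of a measure on `Y × Y`, `Y = X × [0,∞)`. -/
def hMarg1 (p : ℝ) (α : Measure ((↥X × ℝ≥0) × (↥X × ℝ≥0))) : Measure ↥X :=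
  Measure.map (fun q => q.1.1) (α.withDensity fun q => (q.1.2 : ℝ≥0∞) ^ p)

/-- The second `p`-homogeneous marginal of a measure on `Y × Y`, `Y = X × [0,∞)`. -/
def hMarg2 (p : ℝ) (α : Measure ((↥X × ℝ≥0) × (↥X × ℝ≥0))) : Measure ↥X :=
  Measure.map (fun q => q.2.1) (α.withDensity fun q => (q.2.2 : ℝ≥0∞) ^ p)

/-- Membership in the homogeneous constraint set `ℋ^p_{M,≤}(μ₁,μ₂)`. -/
def memHpM (p : ℝ) (μ₁ μ₂ : Measure ↥X) (α : Measure ((↥X × ℝ≥0) × (↥X × ℝ≥0))) : Prop :=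
  IsFiniteMeasure α ∧ (∫⁻ q, (q.1.2 : ℝ≥0∞) ^ p + (q.2.2 : ℝ≥0∞) ^ p ∂α) ≠ ∞ ∧
    hMarg1 p α ≤ μ₁ ∧ hMarg2 p α ≤ μ₂ ∧
    ∀ h : ↥X →ᵇ ℝ, (∫ q, h q.1.1 * ((q.2.1 : ℝ) - (q.1.1 : ℝ)) ∂α) = 0

end Martingale

theorem entF_zero_left_aux {X : Type*} [MeasurableSpace X] (F : EntropyFn) (μ : Measure X) [IsFiniteMeasure μ] :
    entF F 0 μ = F.F 0 * μ Set.univ := by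
  unfold entF
  have h : (∫⁻ x, F.F (((0 : Measure X).rnDeriv μ x).toReal) ∂μ) = ∫⁻ _x, F.F 0 ∂μ := by
    apply lintegral_congr_ae
    filter_upwards [Measure.rnDeriv_zero μ] with x hx
    simp [hx]
  rw [h]
  simp

theorem wOpt_le_aux {X₁ X₂ : Type*} [MeasurableSpace X₁] [MeasurableSpace X₂]
    [StandardBorelSpace X₂] [Nonempty X₂]
    (C : X₁ → ProbabilityMeasure X₂ → EReal) (F₁ F₂ : EntropyFn)
    (μ₁ : Measure X₁) (μ₂ : Measure X₂) [IsFiniteMeasure μ₁] [IsFiniteMeasure μ₂] :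
    wOpt C F₁ F₂ μ₁ μ₂ ≤ ((F₁.F 0 * μ₁ Set.univ : ℝ≥0∞) : EReal) +
      ((F₂.F 0 * μ₂ Set.univ : ℝ≥0∞) : EReal) := by
  unfold wOpt
  refine le_trans (b := wCost C F₁ F₂ μ₁ μ₂ 0 inferInstance) ?_ ?_
  · apply sInf_le
    exact ⟨0, inferInstance, rfl⟩
  unfold wCost eIntegral
  simp only [Measure.fst_zero, Measure.snd_zero, entF_zero_left_aux, lintegral_zero_measure]
  simp

theorem bdd_aux (a : ℝ≥0∞) {X : Type*} (f g : X → ℝ) (M : ℝ) (hM : ∀ x, f x ≤ M)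
    (hf : ∀ x, (f x : EReal) ≤ (a : EReal)) (ε : ℝ) (h0 : 0 < ε) (h1 : ε ≤ 1)
    (hg : ∃ b : ℝ, ((b : ℝ) : EReal) < (a : EReal) ∧ ∀ x, g x ≤ b) :
    ∃ b : ℝ, ((b : ℝ) : EReal) < (a : EReal) ∧ ∀ x, (1 - ε) * f x + ε * g x ≤ b := by
  obtain ⟨b, hb, hgb⟩ := hg
  have h1' : 0 ≤ 1 - ε := by linarith
  by_cases ha : a = ⊤
  · refine ⟨(1 - ε) * M + ε * b, ?_, fun x => ?_⟩
    · rw [ha, EReal.coe_ennreal_top]; exact EReal.coe_lt_top _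
    · exact add_le_add (mul_le_mul_of_nonneg_left (hM x) h1')
        (mul_le_mul_of_nonneg_left (hgb x) h0.le)
  · lift a to ℝ≥0 using ha
    have e : (((a : ℝ≥0∞)) : EReal) = ((a : ℝ) : EReal) := rfl
    rw [e] at hb ⊢
    simp only [e, EReal.coe_le_coe_iff] at hf
    rw [EReal.coe_lt_coe_iff] at hb
    refine ⟨(1 - ε) * a + ε * b, ?_, fun x => ?_⟩
    · rw [EReal.coe_lt_coe_iff]; nlinarith
    · exact add_le_add (mul_le_mul_of_nonneg_left (hf x) h1')
        (mul_le_mul_of_nonneg_left (hgb x) h0.le)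

theorem conv_aux (a b ε : ℝ) (w : EReal) (h0 : 0 < ε) (h1 : ε ≤ 1) (ha : (a : EReal) ≤ w)
    (hb : (b : EReal) ≤ w) : (((1 - ε) * a + ε * b : ℝ) : EReal) ≤ w := by
  refine le_trans ?_ (max_le ha hb)
  rcases le_total a b with h | h
  · refine le_max_of_le_right ?_
    rw [EReal.coe_le_coe_iff]; nlinarith
  · refine le_max_of_le_left ?_
    rw [EReal.coe_le_coe_iff]; nlinarith

theorem lim_aux (a b : ℝ) (w : EReal)
    (h : ∀ ε : ℝ, 0 < ε → ε ≤ 1 → (((1 - ε) * a + ε * b : ℝ) : EReal) ≤ w) :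
    (a : EReal) ≤ w := by
  induction w with
  | bot => have := h 1 one_pos le_rfl; simp at this
  | top => exact le_top
  | coe s =>
    simp only [EReal.coe_le_coe_iff] at h ⊢
    by_contra! hc
    have hb : b ≤ s := by simpa using h 1 one_pos le_rfl
    have hab : 0 < a - b := by linarith
    have key := h ((a - s) / (2 * (a - b))) (by apply div_pos <;> linarith)
      (by rw [div_le_one (by linarith)]; linarith)
    have : (a - s) / (2 * (a - b)) * (a - b) = (a - s) / 2 := by field_simp
    nlinarith

theorem stmt9
    {X₁ : Type*} [MetricSpace X₁] [PolishSpace X₁] [MeasurableSpace X₁] [BorelSpace X₁]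
    {X₂ : Type*} [MetricSpace X₂] [PolishSpace X₂] [MeasurableSpace X₂] [BorelSpace X₂]
    [Nonempty X₂]
    (C : X₁ → ProbabilityMeasure X₂ → EReal)
    (hClsc : LowerSemicontinuous fun q : X₁ × ProbabilityMeasure X₂ => C q.1 q.2)
    (hCbdd : ∃ K : ℝ, ∀ x p, (K : EReal) ≤ C x p)
    (hCconv : ∀ (x : X₁) (p q m : ProbabilityMeasure X₂) (t : ℝ), 0 ≤ t → t ≤ 1 →
      (m : Measure X₂) = ENNReal.ofReal t • (p : Measure X₂)
          + ENNReal.ofReal (1 - t) • (q : Measure X₂) →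
      C x m ≤ (t : EReal) * C x p + ((1 - t : ℝ) : EReal) * C x q)
    (F₁ F₂ : EntropyFn)
    (hne : (lamETltSet C F₁ F₂).Nonempty)
    (μ₁ : Measure X₁) (μ₂ : Measure X₂) [IsFiniteMeasure μ₁] [IsFiniteMeasure μ₂] :
    sSup { e : EReal | ∃ φ ∈ lamETSet C F₁ F₂,
        e = (((∫ x, φ.1 x ∂μ₁) + ∫ x, φ.2 x ∂μ₂ : ℝ) : EReal) }
      = sSup { e : EReal | ∃ φ ∈ lamETltSet C F₁ F₂,
          e = (((∫ x, φ.1 x ∂μ₁) + ∫ x, φ.2 x ∂μ₂ : ℝ) : EReal) } := by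
  classical
  have hI : ∀ (φ ψ : (X₁ →ᵇ ℝ) × (X₂ →ᵇ ℝ)) (ε : ℝ) (ν₁ : Measure X₁) (ν₂ : Measure X₂),
      IsFiniteMeasure ν₁ → IsFiniteMeasure ν₂ →
      (∫ x, ((1 - ε) • φ + ε • ψ).1 x ∂ν₁) + ∫ x, ((1 - ε) • φ + ε • ψ).2 x ∂ν₂
      = (1 - ε) * ((∫ x, φ.1 x ∂ν₁) + ∫ x, φ.2 x ∂ν₂)
        + ε * ((∫ x, ψ.1 x ∂ν₁) + ∫ x, ψ.2 x ∂ν₂) := by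
    intro φ ψ ε ν₁ ν₂ _ _
    have e1 : (∫ x, ((1 - ε) • φ + ε • ψ).1 x ∂ν₁)
        = (1 - ε) * (∫ x, φ.1 x ∂ν₁) + ε * ∫ x, ψ.1 x ∂ν₁ := by
      rw [← integral_const_mul, ← integral_const_mul, ← integral_add
        ((φ.1.integrable ν₁).const_mul _) ((ψ.1.integrable ν₁).const_mul _)]
      rfl
    have e2 : (∫ x, ((1 - ε) • φ + ε • ψ).2 x ∂ν₂)
        = (1 - ε) * (∫ x, φ.2 x ∂ν₂) + ε * ∫ x, ψ.2 x ∂ν₂ := by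
      rw [← integral_const_mul, ← integral_const_mul, ← integral_add
        ((φ.2.integrable ν₂).const_mul _) ((ψ.2.integrable ν₂).const_mul _)]
      rfl
    rw [e1, e2]; ring
  apply le_antisymm
  · apply sSup_le
    rintro _ ⟨φ, hφ, rfl⟩
    obtain ⟨ψ, hψ, hψ1, hψ2⟩ := hne
    apply lim_aux _ ((∫ x, ψ.1 x ∂μ₁) + ∫ x, ψ.2 x ∂μ₂)
    intro ε h0 h1
    apply le_sSup
    refine ⟨(1 - ε) • φ + ε • ψ, ⟨?_, ?_, ?_⟩, ?_⟩
    · intro ν₁ ν₂ i₁ i₂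
      rw [hI φ ψ ε ν₁ ν₂ i₁ i₂]
      exact conv_aux _ _ _ _ h0 h1 (hφ ν₁ ν₂ i₁ i₂) (hψ ν₁ ν₂ i₁ i₂)
    · refine bdd_aux (F₁.F 0) φ.1 ψ.1 ‖φ.1‖
        (fun x => (le_abs_self _).trans (φ.1.norm_coe_le_norm x)) (fun x => ?_) ε h0 h1 hψ1
      have := (hφ (Measure.dirac x) 0 inferInstance inferInstance).trans
        (wOpt_le_aux C F₁ F₂ _ _)
      simpa using this
    · refine bdd_aux (F₂.F 0) φ.2 ψ.2 ‖φ.2‖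
        (fun x => (le_abs_self _).trans (φ.2.norm_coe_le_norm x)) (fun x => ?_) ε h0 h1 hψ2
      have := (hφ 0 (Measure.dirac x) inferInstance inferInstance).trans
        (wOpt_le_aux C F₁ F₂ _ _)
      simpa using this
    · rw [hI φ ψ ε μ₁ μ₂ inferInstance inferInstance]
  · apply sSup_le_sSup
    rintro _ ⟨φ, hφ, rfl⟩
    exact ⟨φ, hφ.1, rfl⟩
end
end

section
/- Let X₁, X₂ be Polish metric spaces, C : X₁ × 𝒫(X₂) → (−∞,+∞] lower semi-continuous, bounded from below, with C(x₁,·) convex for every x₁, and let F₁, F₂ be superlinear admissible entropy functions. Let μ_i ∈ ℳ(X_i) and (μ_i^n)_n ⊂ ℳ(X_i) with μ_i^n → μ_i in the weak* topology for i = 1,2. Then liminf_{n→∞} ℰ_C(μ₁^n, μ₂^n) ≥ ℰ_C(μ₁, μ₂). -/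
open MeasureTheory Filter Set Topology
open scoped ENNReal NNReal BoundedContinuousFunction

noncomputable section

section helperA

namespace EntropyFn

lemma sl_bound (F : EntropyFn) (hF : F.Superlinear) (a : ℝ) :
    ∃ b : ℝ, ∀ s : ℝ, 0 ≤ s → ENNReal.ofReal (a * s - b) ≤ F.F s := by
  obtain ⟨s0, hs0, hv⟩ := F.dom
  lift F.F s0 to ℝ≥0 using hv with v hv'
  have h1 : ∃ᶠ s in atTop, ENNReal.ofReal (|a| + v) < F.F s / ENNReal.ofReal s := by
    apply Filter.frequently_lt_of_lt_limsup
    · isBoundedDefault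
    · have : recessionOf F.F = ∞ := hF
      unfold recessionOf at this
      rw [this]; exact ENNReal.ofReal_lt_top
  obtain ⟨s1, h1, h2⟩ := (h1.and_eventually (eventually_gt_atTop (max s0 1))).exists
  have h3 : s0 < s1 := (le_max_left _ _).trans_lt h2
  have h4 : 1 < s1 := (le_max_right _ _).trans_lt h2
  have h5 : ENNReal.ofReal ((|a| + v) * s1) ≤ F.F s1 := by
    rw [ENNReal.ofReal_mul (by positivity)]
    exact ENNReal.mul_le_of_le_div h1.le
  refine ⟨|a| * s1, fun s hs => ?_⟩
  have hab := le_abs_self a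
  have hab0 := abs_nonneg a
  rcases le_or_gt s s1 with h | h
  · rw [ENNReal.ofReal_of_nonpos]; · exact zero_le
    nlinarith
  · by_cases hfin : F.F s = ∞
    · rw [hfin]; exact le_top
    lift F.F s to ℝ≥0 using hfin with w hw
    have hc := F.convex' s0 hs0.le s hs ((s - s1) / (s - s0)) (div_nonneg (by linarith) (by linarith))
      ((div_le_one (by linarith)).2 (by linarith))
    have e1 : (s - s1) / (s - s0) * s0 + (1 - (s - s1) / (s - s0)) * s = s1 := by
      have : s - s0 ≠ 0 := by linarith
      field_simp; ring
    have e2 : (1 - (s - s1) / (s - s0)) = (s1 - s0) / (s - s0) := by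
      have : s - s0 ≠ 0 := by linarith
      field_simp; ring
    rw [e1, e2, ← hv', ← hw] at hc
    have hc := h5.trans hc
    have p1 : 0 ≤ (s - s1) / (s - s0) := div_nonneg (by linarith) (by linarith)
    have p2 : 0 ≤ (s1 - s0) / (s - s0) := div_nonneg (by linarith) (by linarith)
    rw [← ENNReal.ofReal_coe_nnreal, ← ENNReal.ofReal_coe_nnreal, ← ENNReal.ofReal_mul p1,
      ← ENNReal.ofReal_mul p2, ← ENNReal.ofReal_add (by positivity) (by positivity),
      ENNReal.ofReal_le_ofReal_iff (by positivity)] at hc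
    have hs' : 0 < s - s0 := by linarith
    have hc2 : (|a| + v) * s1 * (s - s0) ≤ (s - s1) * v + (s1 - s0) * w := by
      have := mul_le_mul_of_nonneg_right hc hs'.le
      calc _ ≤ _ := this
        _ = _ := by field_simp
    rw [← ENNReal.ofReal_coe_nnreal]
    apply ENNReal.ofReal_le_ofReal
    have hv0 : (0:ℝ) ≤ v := v.2
    have q1 : (s - s1) * v ≤ v * s1 * (s - s0) := by nlinarith [mul_nonneg hv0 hs'.le, mul_nonneg hv0 (sub_nonneg.2 h3.le)]
    have q2 : |a| * s1 * (s - s0) ≤ (s1 - s0) * w := by nlinarith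
    have q3 : |a| * (s1 - s0) * (s - s0) ≤ (s1 - s0) * w := by nlinarith [mul_nonneg (mul_nonneg hab0 hs0.le) hs'.le]
    have q4 : |a| * (s - s0) ≤ w := by
      have : 0 < s1 - s0 := by linarith
      nlinarith
    nlinarith

/-- The convex conjugate. -/
def conj (F : EntropyFn) (a : ℝ) : ℝ :=
  sSup {y | ∃ s : ℝ, 0 ≤ s ∧ F.F s ≠ ∞ ∧ y = a * s - (F.F s).toReal}

lemma conj_le (F : EntropyFn) {a b : ℝ} (h : ∀ s : ℝ, 0 ≤ s → F.F s ≠ ∞ → ENNReal.ofReal (a * s - b) ≤ F.F s) :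
    F.conj a ≤ b := by
  apply csSup_le
  · obtain ⟨s0, hs0, hv⟩ := F.dom
    exact ⟨_, s0, hs0.le, hv, rfl⟩
  · rintro y ⟨s, hs, hf, rfl⟩
    have := h s hs hf
    rw [ENNReal.ofReal_le_iff_le_toReal hf] at this
    linarith

lemma le_conj (F : EntropyFn) (hF : F.Superlinear) (a s : ℝ) (hs : 0 ≤ s) :
    ENNReal.ofReal (a * s - F.conj a) ≤ F.F s := by
  by_cases hf : F.F s = ∞
  · rw [hf]; exact le_top
  rw [ENNReal.ofReal_le_iff_le_toReal hf]
  obtain ⟨b, hb⟩ := F.sl_bound hF a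
  have : a * s - (F.F s).toReal ≤ F.conj a := by
    apply le_csSup
    · refine ⟨b, ?_⟩
      rintro y ⟨s, hs, hf, rfl⟩
      have := hb s hs
      rw [ENNReal.ofReal_le_iff_le_toReal hf] at this
      linarith
    · exact ⟨s, hs, hf, rfl⟩
  linarith

lemma conj_convex (F : EntropyFn) (hF : F.Superlinear) : ConvexOn ℝ univ F.conj := by
  refine ⟨convex_univ, fun a _ b _ t u ht hu htu => ?_⟩
  apply conj_le
  intro s hs hf
  have h1 := F.le_conj hF a s hs
  have h2 := F.le_conj hF b s hs
  rw [ENNReal.ofReal_le_iff_le_toReal hf] at *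
  simp only [smul_eq_mul]
  have : t * (F.F s).toReal + u * (F.F s).toReal = (F.F s).toReal := by rw [← add_mul, htu, one_mul]
  nlinarith

lemma conj_continuous (F : EntropyFn) (hF : F.Superlinear) : Continuous F.conj := by
  rw [← continuousOn_univ]
  exact (F.conj_convex hF).continuousOn isOpen_univ

lemma epi_convex (F : EntropyFn) :
    Convex ℝ {z : ℝ × ℝ | 0 ≤ z.1 ∧ 0 ≤ z.2 ∧ F.F z.1 ≤ ENNReal.ofReal z.2} := by
  rintro ⟨a, y⟩ ⟨ha, hy, hay⟩ ⟨b, z⟩ ⟨hb, hz, hbz⟩ t u ht hu htu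
  simp only at *
  refine ⟨?_, ?_, ?_⟩
  · simp; positivity
  · simp; positivity
  · have hu' : u = 1 - t := by linarith
    have := F.convex' a ha b hb t ht (by linarith)
    simp only [Prod.smul_mk, smul_eq_mul, Prod.mk_add_mk]
    rw [← hu'] at this
    refine this.trans ?_
    rw [ENNReal.ofReal_add (by positivity) (by positivity), ENNReal.ofReal_mul ht, ENNReal.ofReal_mul hu]
    gcongr

lemma epi_closed (F : EntropyFn) :
    IsClosed {z : ℝ × ℝ | 0 ≤ z.1 ∧ 0 ≤ z.2 ∧ F.F z.1 ≤ ENNReal.ofReal z.2} := by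
  rw [← isOpen_compl_iff, isOpen_iff_mem_nhds]
  rintro ⟨s, y⟩ h
  by_cases hs : 0 ≤ s
  swap
  · have : {z : ℝ × ℝ | z.1 < 0} ∈ 𝓝 (s, y) :=
      (isOpen_lt continuous_fst continuous_const).mem_nhds (by simpa using hs)
    filter_upwards [this] with z hz hz2
    exact absurd hz2.1 (not_le.2 hz)
  by_cases hy : 0 ≤ y
  swap
  · have : {z : ℝ × ℝ | z.2 < 0} ∈ 𝓝 (s, y) :=
      (isOpen_lt continuous_snd continuous_const).mem_nhds (by simpa using hy)
    filter_upwards [this] with z hz hz2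
    exact absurd hz2.2.1 (not_le.2 hz)
  have h1 : ENNReal.ofReal y < F.F s := by
    by_contra hcon
    exact h ⟨hs, hy, not_lt.1 hcon⟩
  obtain ⟨c, hc1, hc2⟩ := exists_between h1
  have h2 := F.lsc s hs c hc2
  rw [eventually_nhdsWithin_iff] at h2
  have h3 : ∀ᶠ z : ℝ × ℝ in 𝓝 (s, y), z.1 ∈ Ici (0:ℝ) → c < F.F z.1 :=
    (continuous_fst.tendsto (s, y)).eventually h2
  have h4 : ∀ᶠ z : ℝ × ℝ in 𝓝 (s, y), ENNReal.ofReal z.2 < c :=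
    ((ENNReal.continuous_ofReal.comp continuous_snd).tendsto (s, y)).eventually (gt_mem_nhds hc1)
  filter_upwards [h3, h4] with z hz hz2 hz3
  exact absurd hz3.2.2 (not_le.2 (hz2.trans (hz hz3.1)))

lemma fenchel (F : EntropyFn) (s : ℝ) (hs : 0 ≤ s) (r : ℝ) (hr : 0 ≤ r)
    (h : ENNReal.ofReal r < F.F s) : ∃ a : ℝ, r < a * s - F.conj a := by
  obtain ⟨f, u, hf1, hf2⟩ := geometric_hahn_banach_point_closed F.epi_convex F.epi_closed
    (x := (s, r)) (fun h' => absurd h'.2.2 (not_le.2 h))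
  set α := f (1, 0) with hα
  set β := f (0, 1) with hβ
  have hf (x y : ℝ) : f (x, y) = α * x + β * y := by
    have : (x, y) = x • ((1:ℝ), (0:ℝ)) + y • ((0:ℝ), (1:ℝ)) := by simp
    rw [this, map_add, map_smul, map_smul, smul_eq_mul, smul_eq_mul]; ring
  rw [hf] at hf1
  have key (t : ℝ) (ht : 0 ≤ t) (htf : F.F t ≠ ∞) (y : ℝ) (hy : (F.F t).toReal ≤ y) : u < α * t + β * y := by
    rw [← hf]
    exact hf2 (t, y) ⟨ht, ENNReal.toReal_nonneg.trans hy, by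
      rw [← ENNReal.ofReal_toReal htf]; exact ENNReal.ofReal_le_ofReal hy⟩
  have hβ0 : 0 ≤ β := by
    by_contra hb
    push Not at hb
    obtain ⟨s0, hs0, hv⟩ := F.dom
    have := key s0 hs0.le hv (max (F.F s0).toReal ((u - α * s0) / β)) (le_max_left _ _)
    have h2 : (u - α * s0) / β ≤ max (F.F s0).toReal ((u - α * s0) / β) := le_max_right _ _
    rw [div_le_iff_of_neg hb] at h2
    linarith
  rcases hβ0.eq_or_lt with h0 | h0
  · -- vertical case
    rw [← h0] at hf1 key
    simp only [zero_mul, add_zero] at hf1 key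
    have hpos : 0 < u - α * s := by linarith
    obtain ⟨n, hn⟩ := exists_nat_gt (r / (u - α * s))
    rw [div_lt_iff₀ hpos] at hn
    refine ⟨-(n * α), ?_⟩
    have : F.conj (-(n * α)) ≤ - (n * u) := by
      apply conj_le
      intro t ht htf
      rw [ENNReal.ofReal_of_nonpos]
      · exact zero_le
      · have := key t ht htf _ le_rfl
        have hn0 : (0:ℝ) ≤ n := n.cast_nonneg
        nlinarith
    nlinarith
  · refine ⟨-α / β, ?_⟩
    have : F.conj (-α / β) ≤ - (u / β) := by
      apply conj_le
      intro t ht htf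
      rw [ENNReal.ofReal_le_iff_le_toReal htf]
      have := key t ht htf _ le_rfl
      have h3 : -α / β * t - - (u / β) = (u - α * t) / β := by ring
      rw [h3, div_le_iff₀ h0]
      linarith
    have h4 : r < (u - α * s) / β := by
      rw [lt_div_iff₀ h0]; linarith
    have h3 : -α / β * s - - (u / β) = (u - α * s) / β := by ring
    linarith

lemma fenchel_rat (F : EntropyFn) (hF : F.Superlinear) (s : ℝ) (hs : 0 ≤ s) (r : ℝ) (hr : 0 ≤ r)
    (h : ENNReal.ofReal r < F.F s) : ∃ q : ℚ, r < q * s - F.conj q := by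
  obtain ⟨a, ha⟩ := F.fenchel s hs r hr h
  have hcont : Continuous fun a : ℝ => a * s - F.conj a :=
    (continuous_id.mul continuous_const).sub (F.conj_continuous hF)
  have ho : IsOpen {a : ℝ | r < a * s - F.conj a} := isOpen_lt continuous_const hcont
  obtain ⟨q, hq⟩ := Rat.isDenseEmbedding_coe_real.dense.exists_mem_open ho ⟨a, ha⟩
  exact ⟨q, hq⟩

lemma fenchel_sup (F : EntropyFn) (hF : F.Superlinear) (s : ℝ) (hs : 0 ≤ s) :
    F.F s ≤ ⨆ q : ℚ, ENNReal.ofReal (q * s - F.conj q) := by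
  apply le_of_forall_lt
  intro c hc
  obtain ⟨d, hd1, hd2⟩ := exists_between hc
  have hdt : d ≠ ∞ := hd2.ne_top
  lift d to ℝ≥0 using hdt
  obtain ⟨q, hq⟩ := F.fenchel_rat hF s hs d d.2 (by rwa [ENNReal.ofReal_coe_nnreal])
  refine hd1.trans_le (le_trans ?_ (le_iSup _ q))
  rw [← ENNReal.ofReal_coe_nnreal]
  exact ENNReal.ofReal_le_ofReal hq.le

lemma conj_zero_nonpos (F : EntropyFn) : F.conj 0 ≤ 0 := by
  apply conj_le
  intro s _ _
  simp

end EntropyFn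

end helperA

section helperB

lemma ofReal_integral_le {X : Type*} [MeasurableSpace X] {μ : Measure X} {g : X → ℝ}
    (hg : Integrable g μ) : ENNReal.ofReal (∫ x, g x ∂μ) ≤ ∫⁻ x, ENNReal.ofReal (g x) ∂μ := by
  have h1 : ∫ x, g x ∂μ ≤ ∫ x, max (g x) 0 ∂μ :=
    integral_mono hg hg.pos_part (fun x => le_max_left _ _)
  refine (ENNReal.ofReal_le_ofReal h1).trans ?_
  rw [ofReal_integral_eq_lintegral_ofReal hg.pos_part (ae_of_all _ fun x => le_max_right _ _)]
  apply lintegral_mono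
  intro x
  simp [ENNReal.ofReal_max]

lemma integrable_of_bdd {X : Type*} [MeasurableSpace X] {μ : Measure X} [IsFiniteMeasure μ] {g : X → ℝ}
    (hg : Measurable g) (M : ℝ) (hM : ∀ x, |g x| ≤ M) : Integrable g μ :=
  Integrable.of_bound hg.aestronglyMeasurable M (ae_of_all _ hM)

namespace EntropyFn

lemma conj_bdd (F : EntropyFn) (hF : F.Superlinear) (M : ℝ) :
    ∃ B : ℝ, ∀ a : ℝ, |a| ≤ M → |F.conj a| ≤ B := by
  obtain ⟨B, hB⟩ := (isCompact_Icc (a := -M) (b := M)).exists_bound_of_continuousOn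
    (F.conj_continuous hF).continuousOn
  exact ⟨B, fun a ha => hB a (abs_le.1 ha)⟩

lemma F_eq (F : EntropyFn) (hF : F.Superlinear) (s : ℝ) (hs : 0 ≤ s) :
    F.F s = ⨆ q : ℚ, ENNReal.ofReal (q * s - F.conj q) :=
  le_antisymm (F.fenchel_sup hF s hs) (iSup_le fun q => F.le_conj hF q s hs)

lemma meas_F (F : EntropyFn) (hF : F.Superlinear) {X : Type*} [MeasurableSpace X] {f : X → ℝ≥0∞}
    (hf : Measurable f) : Measurable fun x => F.F (f x).toReal := by
  have : (fun x => F.F (f x).toReal) =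
      fun x => ⨆ q : ℚ, ENNReal.ofReal (q * (f x).toReal - F.conj q) := by
    funext x; exact F.F_eq hF _ ENNReal.toReal_nonneg
  rw [this]
  refine Measurable.iSup fun q => ?_
  fun_prop

variable {X : Type*} [MeasurableSpace X]

lemma ac_of_entF (F : EntropyFn) (hF : F.Superlinear) (γ μ : Measure X) [IsFiniteMeasure γ]
    [IsFiniteMeasure μ] (h : entF F γ μ ≠ ∞) : γ ≪ μ := by
  have hr : F.recC = ∞ := hF
  have h2 : F.recC * (γ.singularPart μ) univ ≠ ∞ := by
    intro h3; apply h; unfold entF; rw [h3]; simp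
  rw [hr] at h2
  have h3 : (γ.singularPart μ) univ = 0 := by
    by_contra h4; exact h2 (ENNReal.top_mul h4)
  rw [Measure.measure_univ_eq_zero] at h3
  exact (Measure.singularPart_eq_zero γ μ).1 h3

lemma P6 (F : EntropyFn) (hF : F.Superlinear) (γ μ : Measure X) [IsFiniteMeasure γ]
    [IsFiniteMeasure μ] (φ : X → ℝ) (hφ : Measurable φ) (M : ℝ) (hM : ∀ x, |φ x| ≤ M) :
    ENNReal.ofReal (∫ x, φ x ∂γ - ∫ x, F.conj (φ x) ∂μ) ≤ entF F γ μ := by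
  by_cases h : entF F γ μ = ∞
  · rw [h]; exact le_top
  have hac := F.ac_of_entF hF γ μ h
  obtain ⟨B, hB⟩ := F.conj_bdd hF M
  have i1 : Integrable φ γ := integrable_of_bdd hφ M hM
  have i2 : Integrable (fun x => F.conj (φ x)) μ :=
    integrable_of_bdd ((F.conj_continuous hF).measurable.comp hφ) B (fun x => hB _ (hM x))
  have i3 : Integrable (fun x => (γ.rnDeriv μ x).toReal • φ x) μ :=
    (integrable_rnDeriv_smul_iff hac).2 i1
  rw [← integral_rnDeriv_smul hac, ← integral_sub i3 i2]
  refine (ofReal_integral_le (i3.sub i2)).trans ?_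
  refine le_trans (lintegral_mono fun x => ?_) le_self_add
  have := F.le_conj hF (φ x) (γ.rnDeriv μ x).toReal ENNReal.toReal_nonneg
  simpa [smul_eq_mul, mul_comm] using this

/-- recursive selector -/
def sel (F : EntropyFn) (a : ℕ → ℝ) (s : ℝ) : ℕ → ℝ
  | 0 => 0
  | n + 1 => if sel F a s n * s - F.conj (sel F a s n) < a n * s - F.conj (a n) then a n else sel F a s n

lemma sel_ge (F : EntropyFn) (a : ℕ → ℝ) (s : ℝ) (n : ℕ) :
    a n * s - F.conj (a n) ≤ sel F a s (n+1) * s - F.conj (sel F a s (n+1)) := by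
  rw [sel]; split_ifs with h
  · exact le_rfl
  · exact not_lt.1 h

lemma sel_mono (F : EntropyFn) (a : ℕ → ℝ) (s : ℝ) :
    Monotone fun n => sel F a s n * s - F.conj (sel F a s n) := by
  apply monotone_nat_of_le_succ
  intro n
  show _ ≤ sel F a s (n+1) * s - F.conj (sel F a s (n+1))
  rw [sel]; split_ifs with h
  · exact h.le
  · exact le_rfl

lemma sel_nonneg (F : EntropyFn) (a : ℕ → ℝ) (s : ℝ) (n : ℕ) :
    0 ≤ sel F a s n * s - F.conj (sel F a s n) := by
  refine le_trans ?_ (sel_mono F a s (Nat.zero_le n))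
  simp [sel, F.conj_zero_nonpos]

lemma sel_bdd (F : EntropyFn) (a : ℕ → ℝ) (n : ℕ) : ∃ M, ∀ s, |sel F a s n| ≤ M := by
  induction n with
  | zero => exact ⟨0, fun s => by simp [sel]⟩
  | succ n ih =>
    obtain ⟨M, hM⟩ := ih
    refine ⟨max M |a n|, fun s => ?_⟩
    rw [sel]; split_ifs
    · exact le_max_right _ _
    · exact (hM s).trans (le_max_left _ _)

lemma sel_meas (F : EntropyFn) (hF : F.Superlinear) (a : ℕ → ℝ) (n : ℕ) :
    Measurable fun s => sel F a s n := by
  have hc := (F.conj_continuous hF).measurable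
  induction n with
  | zero => exact measurable_const
  | succ n ih =>
    simp only [sel]
    refine Measurable.ite (measurableSet_lt ?_ ?_) measurable_const ih
    · exact (ih.mul measurable_id).sub (hc.comp ih)
    · exact (measurable_id.const_mul _).sub measurable_const

lemma P7meas (F : EntropyFn) (hF : F.Superlinear) (γ μ : Measure X) [IsFiniteMeasure γ]
    [IsFiniteMeasure μ] (L : ℝ≥0∞) (h : ∀ (φ : X → ℝ), Measurable φ → (∃ M : ℝ, ∀ x, |φ x| ≤ M) →
    ENNReal.ofReal (∫ x, φ x ∂γ - ∫ x, F.conj (φ x) ∂μ) ≤ L) : entF F γ μ ≤ L := by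
  by_cases hL : L = ∞
  · rw [hL]; exact le_top
  have hac : γ ≪ μ := by
    refine Measure.AbsolutelyContinuous.mk fun N hN hN0 => ?_
    by_contra hne
    have key : ∀ n : ℕ, (n : ℝ) * γ.real N ≤ L.toReal + F.conj 0 * μ.real univ := by
      intro n
      have h1 := h (N.indicator fun _ => (n:ℝ)) (measurable_const.indicator hN) ⟨n, fun x => by
        by_cases hx : x ∈ N <;> simp [hx]⟩
      have h2 : ∫ x, F.conj (N.indicator (fun _ => (n:ℝ)) x) ∂μ = F.conj 0 * μ.real univ := by
        have : (fun x => F.conj (N.indicator (fun _ => (n:ℝ)) x)) =ᵐ[μ] fun _ => F.conj 0 := by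
          have : ∀ᵐ x ∂μ, x ∉ N := measure_eq_zero_iff_ae_notMem.1 hN0
          filter_upwards [this] with x hx
          simp [hx]
        rw [integral_congr_ae this]; simp [mul_comm]
      rw [h2, integral_indicator_const _ hN] at h1
      have h3 := (ENNReal.ofReal_le_iff_le_toReal hL).1 h1
      simp only [smul_eq_mul] at h3
      linarith
    have hpos : 0 < γ.real N := by
      rw [measureReal_def]; exact ENNReal.toReal_pos hne (measure_ne_top _ _)
    obtain ⟨n, hn⟩ := exists_nat_gt ((L.toReal + F.conj 0 * μ.real univ) / γ.real N)
    rw [div_lt_iff₀ hpos] at hn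
    exact absurd (key n) (not_le.2 hn)
  have hs : γ.singularPart μ = 0 := (Measure.singularPart_eq_zero γ μ).2 hac
  unfold entF
  rw [hs]
  simp only [Measure.coe_zero, Pi.zero_apply, mul_zero, add_zero]
  set f := fun x => (γ.rnDeriv μ x).toReal with hf
  have hfm : Measurable f := (Measure.measurable_rnDeriv γ μ).ennreal_toReal
  have hf0 : ∀ x, 0 ≤ f x := fun x => ENNReal.toReal_nonneg
  obtain ⟨e, he⟩ := exists_surjective_nat ℚ
  set a : ℕ → ℝ := fun n => (e n : ℝ) with ha
  have hmono : ∀ x, F.F (f x) ≤ ⨆ n, ENNReal.ofReal (sel F a (f x) n * f x - F.conj (sel F a (f x) n)) := by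
    intro x
    rw [F.F_eq hF _ (hf0 x)]
    refine iSup_le fun q => ?_
    obtain ⟨n, rfl⟩ := he q
    exact le_iSup_of_le (n+1) (ENNReal.ofReal_le_ofReal (sel_ge F a (f x) n))
  have hc := (F.conj_continuous hF).measurable
  have hsm : ∀ n, Measurable fun x => sel F a (f x) n := fun n => (F.sel_meas hF a n).comp hfm
  refine (lintegral_mono hmono).trans ?_
  rw [lintegral_iSup]
  · refine iSup_le fun n => ?_
    obtain ⟨M, hM⟩ := F.sel_bdd a n
    have h1 := h (fun x => sel F a (f x) n) (hsm n) ⟨M, fun x => hM _⟩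
    refine le_trans (le_of_eq ?_) h1
    obtain ⟨B, hB⟩ := F.conj_bdd hF M
    have i1 : Integrable (fun x => sel F a (f x) n) γ := integrable_of_bdd (hsm n) M (fun x => hM _)
    have i2 : Integrable (fun x => F.conj (sel F a (f x) n)) μ :=
      integrable_of_bdd (hc.comp (hsm n)) B (fun x => hB _ (hM _))
    have i3 : Integrable (fun x => (γ.rnDeriv μ x).toReal • sel F a (f x) n) μ :=
      (integrable_rnDeriv_smul_iff hac).2 i1
    have i4 : Integrable (fun x => (γ.rnDeriv μ x).toReal • sel F a (f x) n - F.conj (sel F a (f x) n)) μ :=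
      i3.sub i2
    rw [← integral_rnDeriv_smul hac, ← integral_sub i3 i2, ofReal_integral_eq_lintegral_ofReal i4]
    · refine lintegral_congr fun x => ?_
      simp [smul_eq_mul, mul_comm, hf]
    · refine ae_of_all _ fun x => ?_
      have := sel_nonneg F a (f x) n
      simpa [smul_eq_mul, mul_comm, hf] using this
  · intro n
    exact (((hsm n).mul hfm).sub (hc.comp (hsm n))).ennreal_ofReal
  · intro n m hnm x
    exact ENNReal.ofReal_le_ofReal (sel_mono F a (f x) hnm)

lemma P7 [TopologicalSpace X] [NormalSpace X] [BorelSpace X] (F : EntropyFn) (hF : F.Superlinear)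
    (γ μ : Measure X) [IsFiniteMeasure γ]
    [IsFiniteMeasure μ] [(γ + μ).WeaklyRegular] (L : ℝ≥0∞) (h : ∀ (φ : X →ᵇ ℝ),
    ENNReal.ofReal (∫ x, φ x ∂γ - ∫ x, F.conj (φ x) ∂μ) ≤ L) : entF F γ μ ≤ L := by
  apply F.P7meas hF
  rintro φ hφ ⟨M, hM⟩
  have i0 : Integrable φ (γ + μ) := integrable_of_bdd hφ M hM
  have hcc := F.conj_continuous hF
  obtain ⟨B, hB⟩ := F.conj_bdd hF M
  choose g hg _ using fun n : ℕ => i0.exists_boundedContinuous_lintegral_sub_le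
    (ε := (n + 1 : ℝ≥0∞)⁻¹) (by simp)
  have ht : TendstoInMeasure (γ + μ) (fun n => (g n : X → ℝ)) atTop φ := by
    apply tendstoInMeasure_of_tendsto_eLpNorm (p := 1) one_ne_zero
    · intro n; exact (g n).continuous.measurable.aestronglyMeasurable
    · exact hφ.aestronglyMeasurable
    · simp only [eLpNorm_one_eq_lintegral_enorm]
      refine tendsto_of_tendsto_of_tendsto_of_le_of_le tendsto_const_nhds
        (h := fun n : ℕ => ((n + 1 : ℝ≥0∞))⁻¹) ?_ (fun n => zero_le) (fun n => ?_)
      · have := (tendsto_add_atTop_iff_nat 1).2 ENNReal.tendsto_inv_nat_nhds_zero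
        simpa using this
      · refine le_trans (le_of_eq ?_) (hg n)
        refine lintegral_congr fun x => ?_
        simp only [Pi.sub_apply]
        exact enorm_sub_rev _ _
  obtain ⟨ns, hns, hae⟩ := ht.exists_seq_tendsto_ae
  have hM0 : ∀ x, φ x ∈ Icc (-M) M := fun x => abs_le.1 (hM x)
  -- clamp
  let cl : ℝ → ℝ := fun t => max (-M) (min M t)
  have hcl : Continuous cl := by fun_prop
  by_cases hX : Nonempty X
  swap
  · rw [not_nonempty_iff] at hX
    have e1 : γ = 0 := Measure.eq_zero_of_isEmpty γ
    have e2 : μ = 0 := Measure.eq_zero_of_isEmpty μ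
    simp [e1, e2]
  have hMpos : 0 ≤ M := (abs_nonneg _).trans (hM hX.some)
  have hclM : ∀ t, |cl t| ≤ M := by
    intro t; rw [abs_le]; exact ⟨le_max_left _ _, max_le (by linarith) (min_le_left _ _)⟩
  have hclφ : ∀ x, cl (φ x) = φ x := by
    intro x; obtain ⟨u, v⟩ := hM0 x
    simp only [cl]; rw [min_eq_right v, max_eq_right u]
  let ψ : ℕ → X →ᵇ ℝ := fun n => BoundedContinuousFunction.ofNormedAddCommGroup
    (fun x => cl (g (ns n) x)) (hcl.comp (g (ns n)).continuous) M (fun x => hclM _)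
  have hψ : ∀ n x, ψ n x = cl (g (ns n) x) := fun n x => rfl
  have hlim : ∀ᵐ x ∂(γ + μ), Tendsto (fun n => ψ n x) atTop (𝓝 (φ x)) := by
    filter_upwards [hae] with x hx
    simp only [hψ]
    rw [← hclφ x]
    exact (hcl.tendsto _).comp hx
  rw [ae_add_measure_iff] at hlim
  have l1 : Tendsto (fun n => ∫ x, ψ n x ∂γ) atTop (𝓝 (∫ x, φ x ∂γ)) := by
    apply tendsto_integral_of_dominated_convergence (fun _ => M)
    · intro n; exact (ψ n).continuous.measurable.aestronglyMeasurable
    · exact integrable_const _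
    · intro n; exact ae_of_all _ fun x => hclM _
    · exact hlim.1
  have l2 : Tendsto (fun n => ∫ x, F.conj (ψ n x) ∂μ) atTop (𝓝 (∫ x, F.conj (φ x) ∂μ)) := by
    apply tendsto_integral_of_dominated_convergence (fun _ => B)
    · intro n; exact (hcc.comp (ψ n).continuous).measurable.aestronglyMeasurable
    · exact integrable_const _
    · intro n; exact ae_of_all _ fun x => hB _ (hclM _)
    · filter_upwards [hlim.2] with x hx using (hcc.tendsto _).comp hx
  exact le_of_tendsto (ENNReal.tendsto_ofReal (l1.sub l2)) (Eventually.of_forall fun n => h (ψ n))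

lemma entF_map {Y : Type*} [MeasurableSpace Y] (F : EntropyFn) (hF : F.Superlinear) {ι : X → Y}
    (hι : MeasurableEmbedding ι) (γ μ : Measure X) [IsFiniteMeasure γ] [IsFiniteMeasure μ] :
    entF F (γ.map ι) (μ.map ι) = entF F γ μ := by
  unfold entF
  rw [hι.singularPart_map, Measure.map_apply hι.measurable MeasurableSet.univ, preimage_univ,
    lintegral_map (F.meas_F hF (Measure.measurable_rnDeriv _ _)) hι.measurable]
  congr 1
  apply lintegral_congr_ae
  filter_upwards [hι.rnDeriv_map γ μ] with x hx
  rw [hx]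

end EntropyFn

end helperB

section helperE

section PM

lemma pm_topology_eq (K : Type*) [TopologicalSpace K] [MeasurableSpace K] [OpensMeasurableSpace K] :
    (inferInstance : TopologicalSpace (ProbabilityMeasure K)) =
      ⨅ f : K →ᵇ ℝ≥0, TopologicalSpace.induced (fun p : ProbabilityMeasure K => ∫⁻ x, f x ∂(p : Measure K))
        inferInstance := by
  apply TopologicalSpace.ext_nhds
  intro p
  rw [nhds_iInf]
  apply le_antisymm
  · refine le_iInf fun f => ?_
    rw [nhds_induced (fun p : ProbabilityMeasure K => ∫⁻ x, f x ∂(p : Measure K)), ← tendsto_iff_comap]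
    exact ProbabilityMeasure.tendsto_iff_forall_lintegral_tendsto.1 tendsto_id f
  · refine tendsto_id'.1 (ProbabilityMeasure.tendsto_iff_forall_lintegral_tendsto.2 ?_)
    intro f
    refine Tendsto.mono_left ?_ (iInf_le _ f)
    rw [nhds_induced (fun p : ProbabilityMeasure K => ∫⁻ x, f x ∂(p : Measure K))]
    exact tendsto_comap

variable {K : Type*} [TopologicalSpace K] [CompactSpace K] [TopologicalSpace.MetrizableSpace K]
  [SecondCountableTopology K] [MeasurableSpace K] [BorelSpace K]

instance pm_sc : SecondCountableTopology (ProbabilityMeasure K) := by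
  let _ := TopologicalSpace.metrizableSpaceMetric (ProbabilityMeasure K)
  infer_instance

instance pm_borel : BorelSpace (ProbabilityMeasure K) := by
  constructor
  apply le_antisymm
  · -- Giry ≤ Borel
    have : @Measurable (ProbabilityMeasure K) (Measure K) (borel _) _ (fun p => (p : Measure K)) := by
      let _ : MeasurableSpace (ProbabilityMeasure K) := borel _
      have : BorelSpace (ProbabilityMeasure K) := ⟨rfl⟩
      refine Measurable.measure_of_isPiSystem_of_isProbabilityMeasure
        (S := {s | IsOpen s}) (BorelSpace.measurable_eq (α := K)) isPiSystem_isOpen ?_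
      intro U hU
      apply LowerSemicontinuous.measurable
      rw [lowerSemicontinuous_iff_le_liminf]
      intro p
      exact ProbabilityMeasure.le_liminf_measure_open_of_tendsto tendsto_id hU
    exact this.comap_le
  · have hgen : (inferInstance : TopologicalSpace (ProbabilityMeasure K)) =
        TopologicalSpace.generateFrom (⋃ f : K →ᵇ ℝ≥0,
          (preimage (fun p : ProbabilityMeasure K => ∫⁻ x, f x ∂(p : Measure K))) '' {s | IsOpen s}) := by
      rw [generateFrom_iUnion, pm_topology_eq K]
      congr 1; funext f
      rw [← induced_generateFrom_eq, TopologicalSpace.generateFrom_setOf_isOpen]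
    rw [borel_eq_generateFrom_of_subbasis hgen]
    apply MeasurableSpace.generateFrom_le
    intro t ht
    obtain ⟨f, hf⟩ := mem_iUnion.1 ht
    obtain ⟨s, hs, rfl⟩ := hf
    have hm : Measurable (fun p : ProbabilityMeasure K => ∫⁻ x, f x ∂(p : Measure K)) := by
      exact (Measure.measurable_lintegral (f.continuous.measurable.coe_nnreal_ennreal)).comp measurable_subtype_coe
    exact hm (IsOpen.measurableSet hs)

end PM

end helperE

section helperG

section PM2
variable {K : Type*} [TopologicalSpace K] [CompactSpace K] [TopologicalSpace.MetrizableSpace K]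
  [SecondCountableTopology K] [MeasurableSpace K] [BorelSpace K]

instance pm_polish : PolishSpace (ProbabilityMeasure K) := by
  let _ := TopologicalSpace.metrizableSpaceMetric (ProbabilityMeasure K)
  infer_instance

variable {X : Type*} [TopologicalSpace X] [TopologicalSpace.MetrizableSpace X] 
  [MeasurableSpace X] [BorelSpace X]

/-- Push-forward of probability measures. -/
def pushP (ι : X → K) (hι : Continuous ι) (p : ProbabilityMeasure X) : ProbabilityMeasure K :=
  p.map hι.measurable.aemeasurable

lemma pushP_coe (ι : X → K) (hι : Continuous ι) (p : ProbabilityMeasure X) :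
    (pushP ι hι p : Measure K) = (p : Measure X).map ι := rfl

lemma pushP_inducing (ι : X → K) (hι : IsEmbedding ι) : IsInducing (pushP ι hι.continuous) := by
  rw [isInducing_iff_nhds]
  intro p
  apply le_antisymm
  · rw [← tendsto_iff_comap]
    exact (ProbabilityMeasure.continuous_map hι.continuous).tendsto p
  · refine tendsto_id'.1 (tendsto_of_forall_isOpen_le_liminf' fun G hG => ?_)
    obtain ⟨V, hV, rfl⟩ := hι.isInducing.isOpen_iff.1 hG
    have h := ProbabilityMeasure.le_liminf_measure_open_of_tendsto
      (tendsto_comap (f := pushP ι hι.continuous) (x := 𝓝 (pushP ι hι.continuous p))) hV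
    simp only [pushP_coe, Measure.map_apply hι.continuous.measurable hV.measurableSet] at h
    exact h

lemma lsc_ext {Y Z : Type*} [TopologicalSpace Y] [TopologicalSpace Z] (J : Y → Z) (hJ : IsInducing J)
    (c : Y → ℝ≥0∞) (hc : LowerSemicontinuous c) :
    ∃ cb : Z → ℝ≥0∞, LowerSemicontinuous cb ∧ ∀ y, cb (J y) = c y := by
  refine ⟨fun z => liminf c (comap J (𝓝 z)), ?_, ?_⟩
  · intro z a ha
    obtain ⟨b, hb1, hb2⟩ := exists_between (show a < liminf c (comap J (𝓝 z)) from ha)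
    have h1 := eventually_lt_of_lt_liminf hb2
    rw [eventually_comap] at h1
    have h2 := h1.eventually_nhds
    filter_upwards [h2] with w hw
    refine hb1.trans_le (le_liminf_of_le (by isBoundedDefault) ?_)
    rw [eventually_comap]
    filter_upwards [hw] with v hv y hy using (hv y hy).le
  · intro y
    show liminf c (comap J (𝓝 (J y))) = c y
    rw [← hJ.nhds_eq_comap]
    apply le_antisymm
    · apply liminf_le_of_frequently_le'
      rw [frequently_iff]
      intro U hU
      exact ⟨y, mem_of_mem_nhds hU, le_rfl⟩
    · exact lowerSemicontinuousAt_iff_le_liminf.1 (hc y)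

lemma lsc_approx {Z : Type*} [TopologicalSpace Z] [TopologicalSpace.MetrizableSpace Z]
    (c : Z → ℝ≥0∞) (hc : LowerSemicontinuous c) :
    ∃ f : ℕ → Z →ᵇ ℝ≥0, (Monotone fun k => fun z => (f k z : ℝ≥0∞)) ∧
      ∀ z, c z = ⨆ k, (f k z : ℝ≥0∞) := by
  let _ := TopologicalSpace.metrizableSpaceMetric Z
  let g : ℕ → Z → ℝ≥0∞ := fun k z => ⨅ y, (min (c y) k + k * edist z y)
  have gle : ∀ k z, g k z ≤ min (c z) k := fun k z => (iInf_le _ z).trans (by simp)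
  have glek : ∀ k z, g k z ≤ k := fun k z => (gle k z).trans (min_le_right _ _)
  have gfin : ∀ k z, g k z ≠ ∞ := fun k z => ne_top_of_le_ne_top (ENNReal.natCast_ne_top k) (glek k z)
  have glip : ∀ k x y, g k x ≤ g k y + k * edist x y := by
    intro k x y
    simp only [g]
    rw [ENNReal.iInf_add]
    refine le_iInf fun w => (iInf_le _ w).trans ?_
    rw [add_assoc, ← mul_add]
    gcongr
    rw [add_comm]; exact edist_triangle _ _ _
  have gcont : ∀ k, Continuous (g k) := fun k =>
    continuous_of_le_add_edist k (ENNReal.natCast_ne_top k) (glip k)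
  have gnn : ∀ k, Continuous fun z => (g k z).toNNReal := fun k =>
    continuous_iff_continuousAt.2 fun z =>
      (ENNReal.tendsto_toNNReal (gfin k z)).comp ((gcont k).tendsto z)
  let f : ℕ → Z →ᵇ ℝ≥0 := fun k => BoundedContinuousFunction.mkOfBound ⟨_, gnn k⟩ k (by
    intro x y
    have h1 : ∀ z, ((g k z).toNNReal : ℝ) ≤ k := by
      intro z
      have := ENNReal.toNNReal_mono (ENNReal.natCast_ne_top k) (glek k z)
      rw [ENNReal.toNNReal_natCast] at this
      exact_mod_cast this
    rw [NNReal.dist_eq, abs_le]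
    have := h1 x; have := h1 y
    have h0 : ∀ z, (0:ℝ) ≤ ((g k z).toNNReal : ℝ) := fun z => NNReal.coe_nonneg _
    have := h0 x; have := h0 y
    constructor <;> (simp only [ContinuousMap.coe_mk]; linarith))
  have hf : ∀ k z, (f k z : ℝ≥0∞) = g k z := fun k z => ENNReal.coe_toNNReal (gfin k z)
  refine ⟨f, ?_, ?_⟩
  · intro k l hkl z
    simp only [hf]
    refine iInf_mono fun y => ?_
    have : (k : ℝ≥0∞) ≤ l := by exact_mod_cast hkl
    gcongr
  · intro z
    simp only [hf]
    apply le_antisymm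
    · apply le_of_forall_lt
      intro a ha
      obtain ⟨b, hab, hb⟩ := exists_between ha
      refine hab.trans_le ?_
      have h1 := hc z b hb
      obtain ⟨r, hr, hball⟩ := Metric.eventually_nhds_iff.1 h1
      have hbt : b ≠ ∞ := hb.ne_top
      obtain ⟨k1, hk1⟩ := ENNReal.exists_nat_gt hbt
      have hr0 : ENNReal.ofReal r ≠ 0 := by simpa using hr
      obtain ⟨k2, hk2⟩ := ENNReal.exists_nat_mul_gt hr0 hbt
      refine le_iSup_of_le (max k1 k2) (le_iInf fun y => ?_)
      have e1 : (k1 : ℝ≥0∞) ≤ (max k1 k2 : ℕ) := by exact_mod_cast le_max_left _ _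
      have e2 : (k2 : ℝ≥0∞) ≤ (max k1 k2 : ℕ) := by exact_mod_cast le_max_right _ _
      rcases lt_or_ge (dist y z) r with h | h
      · exact (le_min (hball h).le (hk1.le.trans e1)).trans le_self_add
      · refine le_trans ?_ le_add_self
        refine hk2.le.trans (mul_le_mul' e2 ?_)
        rw [edist_dist, dist_comm]
        exact ENNReal.ofReal_le_ofReal h
    · exact iSup_le fun k => (gle k z).trans (min_le_left _ _)

lemma lsc_lintegral_le {Z : Type*} [TopologicalSpace Z] [TopologicalSpace.MetrizableSpace Z]
    [MeasurableSpace Z] [BorelSpace Z] (c : Z → ℝ≥0∞) (hc : LowerSemicontinuous c)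
    {N : Type*} {u : Filter N} [u.NeBot] {Λn : N → FiniteMeasure Z} {Λ : FiniteMeasure Z}
    (hΛ : Tendsto Λn u (𝓝 Λ)) {E : ℝ≥0∞}
    (hE : Tendsto (fun n => ∫⁻ z, c z ∂(Λn n : Measure Z)) u (𝓝 E)) :
    ∫⁻ z, c z ∂(Λ : Measure Z) ≤ E := by
  obtain ⟨f, hmono, hf⟩ := lsc_approx c hc
  simp_rw [hf]
  rw [lintegral_iSup (fun k => (f k).continuous.measurable.coe_nnreal_ennreal) hmono]
  refine iSup_le fun k => ?_
  refine le_of_tendsto_of_tendsto' (FiniteMeasure.tendsto_iff_forall_lintegral_tendsto.1 hΛ (f k)) hE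
    fun n => lintegral_mono fun z => ?_
  rw [hf z]; exact le_iSup (fun k => (f k z : ℝ≥0∞)) k

lemma jensen (Θ : Measure (ProbabilityMeasure K)) [IsProbabilityMeasure Θ]
    (D : Set (ProbabilityMeasure K)) (g : ProbabilityMeasure K → ℝ≥0∞) (hg : Measurable g)
    (hD : ∀ p ∈ D, ∀ q ∈ D, ∀ t : ℝ, 0 ≤ t → t ≤ 1 → ∃ m ∈ D,
      (m : Measure K) = ENNReal.ofReal t • (p : Measure K) + ENNReal.ofReal (1 - t) • (q : Measure K) ∧
      g m ≤ ENNReal.ofReal t * g p + ENNReal.ofReal (1 - t) * g q)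
    (hΘ : ∀ᵐ p ∂Θ, p ∈ D) (b : ProbabilityMeasure K)
    (hb : ∀ f : K →ᵇ ℝ, ∫ x, f x ∂(b : Measure K) = ∫ p, ∫ x, f x ∂((p : ProbabilityMeasure K) : Measure K) ∂Θ)
    (hlsc : LowerSemicontinuousAt g b) : g b ≤ ∫⁻ p, g p ∂Θ := by
  by_contra! hcon
  obtain ⟨r, hr1, hr2⟩ := exists_between hcon
  have hrt : r ≠ ∞ := hr2.ne_top
  have hint : ∫⁻ p, g p ∂Θ ≠ ∞ := hr1.ne_top
  let Φ : ProbabilityMeasure K → ((K →ᵇ ℝ) → ℝ) := fun p f => ∫ x, f x ∂(p : Measure K)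
  have hΦ : comap Φ (𝓝 (Φ b)) ≤ 𝓝 b := by
    refine tendsto_id'.1 (ProbabilityMeasure.tendsto_iff_forall_integral_tendsto.2 fun f => ?_)
    exact (tendsto_pi_nhds.1 (tendsto_comap (f := Φ) (x := 𝓝 (Φ b)))) f
  have hmem := hΦ (hlsc r hr2)
  rw [mem_comap] at hmem
  obtain ⟨V, hV, hVs⟩ := hmem
  rw [nhds_pi, Filter.mem_pi] at hV
  obtain ⟨I, hI, t, ht, hIt⟩ := hV
  have : Fintype I := hI.fintype
  let S : Set ((I → ℝ) × ℝ) := {w | ∃ p ∈ D, (∀ i : I, w.1 i = Φ p i) ∧ 0 ≤ w.2 ∧ g p ≤ ENNReal.ofReal w.2}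
  have hS : Convex ℝ S := by
    rintro w ⟨p, hp, hp1, hp0, hp2⟩ w' ⟨q, hq, hq1, hq0, hq2⟩ a a' ha ha' haa
    obtain rfl : a' = 1 - a := by linarith
    obtain ⟨m, hm, hm1, hm2⟩ := hD p hp q hq a ha (by linarith)
    refine ⟨m, hm, fun i => ?_, ?_, ?_⟩
    · simp only [Prod.fst_add, Prod.smul_fst, Pi.add_apply, Pi.smul_apply, smul_eq_mul, hp1, hq1, Φ, hm1]
      have ip : ∀ p : ProbabilityMeasure K, Integrable (i : K →ᵇ ℝ) (p : Measure K) := fun p =>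
        BoundedContinuousFunction.integrable _ _
      rw [integral_add_measure ((ip p).smul_measure ENNReal.ofReal_ne_top)
        ((ip q).smul_measure ENNReal.ofReal_ne_top), integral_smul_measure, integral_smul_measure,
        ENNReal.toReal_ofReal ha, ENNReal.toReal_ofReal ha']
      simp
    · simp only [Prod.snd_add, Prod.smul_snd, smul_eq_mul]; positivity
    · refine hm2.trans ?_
      simp only [Prod.snd_add, Prod.smul_snd, smul_eq_mul]
      rw [ENNReal.ofReal_add (by positivity) (by positivity), ENNReal.ofReal_mul ha, ENNReal.ofReal_mul ha']
      gcongr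
  let h : ProbabilityMeasure K → (I → ℝ) × ℝ := fun p => (fun i => Φ p i, (g p).toReal)
  have hΦc : ∀ i : K →ᵇ ℝ, Continuous fun p => Φ p i := fun i =>
    continuous_iff_continuousAt.2 fun p =>
      ProbabilityMeasure.tendsto_iff_forall_integral_tendsto.1 tendsto_id i
  have i1 : ∀ i : K →ᵇ ℝ, Integrable (fun p => Φ p i) Θ := fun i =>
    integrable_of_bdd (hΦc i).measurable ‖i‖ (fun p => by
      have := BoundedContinuousFunction.norm_integral_le_norm (p : Measure K) i
      simpa [Φ] using this)
  have i2 : Integrable (fun p => (g p).toReal) Θ := integrable_toReal_of_lintegral_ne_top hg.aemeasurable hint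
  have i3' : Integrable (fun p => fun i : I => Φ p i) Θ := Integrable.of_eval fun i => i1 i
  have i3 : Integrable h Θ := i3'.prodMk i2
  have hae : ∀ᵐ p ∂Θ, h p ∈ closure S := by
    filter_upwards [hΘ, ae_lt_top hg hint] with p hp hp2
    exact subset_closure ⟨p, hp, fun i => rfl, ENNReal.toReal_nonneg, (ENNReal.ofReal_toReal hp2.ne).ge⟩
  have hm := hS.closure.integral_mem isClosed_closure hae i3
  have e1 : ∀ i : I, (∫ p, h p ∂Θ).1 i = Φ b i := by
    intro i
    have := ((ContinuousLinearMap.proj (R := ℝ) (φ := fun _ : I => ℝ) i).comp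
      (ContinuousLinearMap.fst ℝ (I → ℝ) ℝ)).integral_comp_comm i3
    simp only [ContinuousLinearMap.comp_apply, ContinuousLinearMap.coe_fst', ContinuousLinearMap.proj_apply] at this
    rw [← this]
    exact (hb i).symm
  have e2 : (∫ p, h p ∂Θ).2 = (∫⁻ p, g p ∂Θ).toReal := by
    have := (ContinuousLinearMap.snd ℝ (I → ℝ) ℝ).integral_comp_comm i3
    simp only [ContinuousLinearMap.coe_snd'] at this
    rw [← this]
    exact integral_toReal hg.aemeasurable (ae_lt_top hg hint)
  rw [mem_closure_iff_nhds] at hm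
  have hnb : {w : (I → ℝ) × ℝ | (∀ i : I, w.1 i ∈ t i) ∧ w.2 < r.toReal} ∈ 𝓝 (∫ p, h p ∂Θ) := by
    refine inter_mem ?_ ?_
    · have : ∀ i : I, ∀ᶠ w in 𝓝 (∫ p, h p ∂Θ), w.1 i ∈ t i := by
        intro i
        have hc : Continuous fun w : (I → ℝ) × ℝ => w.1 i := by fun_prop
        apply hc.tendsto
        rw [e1]; exact ht i
      exact eventually_all.2 this
    · have hc : Continuous fun w : (I → ℝ) × ℝ => w.2 := by fun_prop
      apply (hc.tendsto _).eventually (gt_mem_nhds _)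
      rw [e2]; exact (ENNReal.toReal_lt_toReal hint hrt).2 hr1
  obtain ⟨w, ⟨hw1, hw2⟩, p, hp, hp1, hp0, hp2⟩ := hm _ hnb
  have hpV : Φ p ∈ V := hIt fun i hi => by
    have := hw1 ⟨i, hi⟩; rw [hp1] at this; exact this
  have h1 : r < g p := hVs hpV
  have h2 : g p < r := by
    refine hp2.trans_lt ?_
    rw [ENNReal.ofReal_lt_iff_lt_toReal hp0 hrt]; exact hw2
  exact lt_asymm h1 h2

end PM2

end helperG

section helperH
open ProbabilityTheory
/-- The shifted cost. -/
def shiftC {X₁ P : Type*} (C : X₁ → P → EReal) (k : ℝ≥0) (q : X₁ × P) : ℝ≥0∞ :=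
  (C q.1 q.2 + ((k : ℝ) : EReal)).toENNReal

lemma posE_eq (a : EReal) : posE a = a.toENNReal := rfl

lemma posE_shift (a : EReal) (k : ℝ≥0) (h : ((-(k:ℝ) : ℝ) : EReal) ≤ a) :
    posE a + k = (a + ((k : ℝ) : EReal)).toENNReal + posE (-a) := by
  induction a with
  | bot => simp at h
  | top => simp [posE_eq]
  | coe r =>
    rw [EReal.coe_le_coe_iff] at h
    simp only [posE_eq]
    rw [← EReal.coe_add, ← EReal.coe_neg]
    simp only [EReal.toENNReal_of_ne_top (EReal.coe_ne_top _), EReal.toReal_coe]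
    rcases le_total 0 r with hr | hr
    · rw [ENNReal.ofReal_of_nonpos (show -r ≤ 0 by linarith), add_zero, ENNReal.ofReal_add hr (NNReal.coe_nonneg k)]
      simp
    · rw [ENNReal.ofReal_of_nonpos hr, zero_add, ← ENNReal.ofReal_add (by linarith) (by linarith)]
      simp

lemma posE_neg_le (a : EReal) (k : ℝ≥0) (h : ((-(k:ℝ) : ℝ) : EReal) ≤ a) :
    posE (-a) ≤ k := by
  rw [posE_eq]
  have : -a ≤ ((k:ℝ) : EReal) := by
    rw [EReal.neg_le]; simpa using h
  calc _ ≤ (((k:ℝ) : EReal)).toENNReal := EReal.toENNReal_le_toENNReal this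
    _ = k := by simp [EReal.toENNReal_of_ne_top]

section red
variable {X₁ X₂ : Type*} [MeasurableSpace X₁] [MeasurableSpace X₂]

/-- Conditional kernel as a probability measure. -/
def ck [StandardBorelSpace X₂] [Nonempty X₂] (γ : Measure (X₁ × X₂)) [IsFiniteMeasure γ] (x : X₁) :
    ProbabilityMeasure X₂ := ⟨γ.condKernel x, inferInstance⟩

lemma wCost_eq [StandardBorelSpace X₂] [Nonempty X₂]
    (C : X₁ → ProbabilityMeasure X₂ → EReal) (F₁ F₂ : EntropyFn)
    (μ₁ : Measure X₁) (μ₂ : Measure X₂) (k : ℝ≥0) (hk : ∀ x p, ((-(k:ℝ) : ℝ) : EReal) ≤ C x p)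
    (γ : Measure (X₁ × X₂)) [hγ : IsFiniteMeasure γ]
    (hm : Measurable fun x => shiftC C k (x, ck γ x)) :
    wCost C F₁ F₂ μ₁ μ₂ γ hγ = ((entF F₁ γ.fst μ₁ + entF F₂ γ.snd μ₂ +
      ∫⁻ x, shiftC C k (x, ck γ x) ∂γ.fst : ℝ≥0∞) : EReal) - (((k:ℝ) * γ.real univ : ℝ) : EReal) := by
  set I := ∫⁻ x, shiftC C k (x, ck γ x) ∂γ.fst with hI
  set A := ∫⁻ x, posE (C x (ck γ x)) ∂γ.fst with hA
  set B := ∫⁻ x, posE (-(C x (ck γ x))) ∂γ.fst with hB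
  have huniv : γ.fst univ = γ univ := by
    rw [Measure.fst_apply MeasurableSet.univ, preimage_univ]
  have h1 : A + k * γ univ = I + B := by
    rw [hA, hI, hB, ← lintegral_add_left hm, ← huniv, ← lintegral_const, ← lintegral_add_right _ measurable_const]
    exact lintegral_congr fun x => posE_shift _ _ (hk _ _)
  have hBle : B ≤ k * γ univ := by
    rw [← huniv, ← lintegral_const]
    exact lintegral_mono fun x => posE_neg_le _ _ (hk _ _)
  have hkt : k * γ univ ≠ ∞ := ENNReal.mul_ne_top ENNReal.coe_ne_top (measure_ne_top _ _)
  have hBt : B ≠ ∞ := ne_top_of_le_ne_top hkt hBle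
  have hkr : (((k:ℝ) * γ.real univ : ℝ) : EReal) = ((k * γ univ : ℝ≥0∞) : EReal) := by
    rw [measureReal_def]
    have hf : γ univ ≠ ∞ := measure_ne_top _ _
    generalize γ univ = w at hf
    lift w to ℝ≥0 using hf
    rw [← ENNReal.coe_mul]
    rfl
  have h2 : (A : EReal) - (B : EReal) = (I : EReal) - ((k * γ univ : ℝ≥0∞) : EReal) := by
    have h1' : (A : EReal) + ((k * γ univ : ℝ≥0∞) : EReal) = (I : EReal) + (B : EReal) := by
      rw [← EReal.coe_ennreal_add, h1, EReal.coe_ennreal_add]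
    generalize k * γ univ = w at *
    clear_value A B I
    lift w to ℝ≥0 using hkt
    lift B to ℝ≥0 using hBt
    by_cases hAt : A = ∞
    · have : I = ∞ := by
        rw [hAt] at h1; simp at h1; by_contra h
        exact absurd h1.symm (ENNReal.add_ne_top.2 ⟨h, ENNReal.coe_ne_top⟩)
      rw [hAt, this]
      rfl
    · have hIt : I ≠ ∞ := by
        intro h; rw [h] at h1; simp at h1
        exact absurd h1 hAt
      lift A to ℝ≥0 using hAt
      lift I to ℝ≥0 using hIt
      have : (A:ℝ) + w = I + B := by exact_mod_cast h1
      show (((A:ℝ)):EReal) - ((B:ℝ):EReal) = ((I:ℝ):EReal) - ((w:ℝ):EReal)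
      rw [← EReal.coe_sub, ← EReal.coe_sub]
      congr 1; linarith
  have h3 : wCost C F₁ F₂ μ₁ μ₂ γ hγ = ((entF F₁ γ.fst μ₁ : ℝ≥0∞) : EReal) + ((entF F₂ γ.snd μ₂ : ℝ≥0∞) : EReal) +
    ((A : EReal) - (B : EReal)) := rfl
  rw [h3, h2, hkr, EReal.coe_ennreal_add, EReal.coe_ennreal_add, sub_eq_add_neg, sub_eq_add_neg, add_assoc, add_assoc, add_assoc]

lemma ennreal_sub_lt {T : ℝ≥0∞} {a M : ℝ} (h : (T : EReal) - (a : EReal) < (M : EReal)) :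
    T ≤ ENNReal.ofReal (M + a) ∧ 0 ≤ M + a := by
  by_cases hT : T = ∞
  · subst hT; exact absurd h (by simp)
  lift T to ℝ≥0 using hT
  have h' : (((T:ℝ)):EReal) - (a : EReal) < (M : EReal) := h
  rw [← EReal.coe_sub, EReal.coe_lt_coe_iff] at h'
  have := T.2
  constructor
  · rw [← ENNReal.ofReal_coe_nnreal]; exact ENNReal.ofReal_le_ofReal (by linarith)
  · have : (0:ℝ) ≤ T := T.2
    linarith

lemma ennreal_sub_le {T : ℝ≥0∞} {a M : ℝ} (h : T ≤ ENNReal.ofReal (M + a)) (h0 : 0 ≤ M + a) :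
    (T : EReal) - (a : EReal) ≤ (M : EReal) := by
  have hT : T ≠ ∞ := ne_top_of_le_ne_top ENNReal.ofReal_ne_top h
  lift T to ℝ≥0 using hT
  show (((T:ℝ)):EReal) - (a : EReal) ≤ (M : EReal)
  rw [← EReal.coe_sub, EReal.coe_le_coe_iff]
  rw [← ENNReal.ofReal_coe_nnreal, ENNReal.ofReal_le_ofReal_iff h0] at h
  linarith

end red

lemma entF_lsc {K : Type*} [TopologicalSpace K] [TopologicalSpace.MetrizableSpace K]
    [MeasurableSpace K] [BorelSpace K] (F : EntropyFn) (hF : F.Superlinear)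
    {N : Type*} {u : Filter N} [u.NeBot] {γn μn : N → FiniteMeasure K} {γ μ : FiniteMeasure K}
    (hγ : Tendsto γn u (𝓝 γ)) (hμ : Tendsto μn u (𝓝 μ)) {E : ℝ≥0∞}
    (hE : Tendsto (fun n => entF F (γn n : Measure K) (μn n : Measure K)) u (𝓝 E)) :
    entF F (γ : Measure K) (μ : Measure K) ≤ E := by
  let _ := TopologicalSpace.metrizableSpaceMetric K
  apply F.P7 hF
  intro φ
  obtain ⟨B, hB⟩ := F.conj_bdd hF ‖φ‖
  have hφ : ∀ x, |φ x| ≤ ‖φ‖ := fun x => φ.norm_coe_le_norm x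
  let ψ : K →ᵇ ℝ := BoundedContinuousFunction.ofNormedAddCommGroup (fun x => F.conj (φ x))
    ((F.conj_continuous hF).comp φ.continuous) B (fun x => hB _ (hφ x))
  have l1 := FiniteMeasure.tendsto_iff_forall_integral_tendsto.1 hγ φ
  have l2 := FiniteMeasure.tendsto_iff_forall_integral_tendsto.1 hμ ψ
  refine le_of_tendsto_of_tendsto' (ENNReal.tendsto_ofReal (l1.sub l2)) hE fun n => ?_
  exact F.P6 hF _ _ φ φ.continuous.measurable ‖φ‖ hφ

/-- evaluation kernel -/
def evK (K : Type*) [MeasurableSpace K] : Kernel (ProbabilityMeasure K) K :=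
  ⟨fun p => (p : Measure K), measurable_subtype_coe⟩

instance evK_markov (K : Type*) [MeasurableSpace K] : IsMarkovKernel (evK K) := ⟨fun p => p.2⟩

section bary
variable {K Z : Type*} [TopologicalSpace K] [CompactSpace K] [TopologicalSpace.MetrizableSpace K]
  [SecondCountableTopology K] [MeasurableSpace K] [BorelSpace K]
  [TopologicalSpace Z] [CompactSpace Z] [TopologicalSpace.MetrizableSpace Z]
  [SecondCountableTopology Z] [MeasurableSpace Z] [BorelSpace Z]

/-- barycenter of the second marginal -/
def bary (Λ : FiniteMeasure (Z × ProbabilityMeasure K)) : FiniteMeasure K :=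
  ⟨(Λ : Measure (Z × ProbabilityMeasure K)).snd.bind (evK K), inferInstance⟩

lemma bary_coe (Λ : FiniteMeasure (Z × ProbabilityMeasure K)) :
    (bary Λ : Measure K) = (Λ : Measure (Z × ProbabilityMeasure K)).snd.bind (evK K) := rfl

lemma bary_tendsto {N : Type*} {u : Filter N} {Λn : N → FiniteMeasure (Z × ProbabilityMeasure K)}
    {Λ : FiniteMeasure (Z × ProbabilityMeasure K)} (h : Tendsto Λn u (𝓝 Λ)) :
    Tendsto (fun n => bary (Λn n)) u (𝓝 (bary Λ)) := by
  rw [FiniteMeasure.tendsto_iff_forall_lintegral_tendsto] at h ⊢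
  intro f
  have hfin : ∀ p : ProbabilityMeasure K, ∫⁻ x, f x ∂(p : Measure K) ≠ ∞ := fun p =>
    (f.lintegral_lt_top_of_nnreal (p : Measure K)).ne
  have hc : Continuous fun z : Z × ProbabilityMeasure K => (∫⁻ x, f x ∂(z.2 : Measure K)).toNNReal := by
    have h1 : Continuous fun p : ProbabilityMeasure K => ∫⁻ x, f x ∂(p : Measure K) :=
      ProbabilityMeasure.continuous_lintegral_boundedContinuousFunction f
    refine Continuous.comp (g := fun p : ProbabilityMeasure K => (∫⁻ x, f x ∂(p : Measure K)).toNNReal) ?_ continuous_snd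
    exact continuous_iff_continuousAt.2 fun p =>
      (ENNReal.tendsto_toNNReal (hfin p)).comp (h1.tendsto p)
  let g : (Z × ProbabilityMeasure K) →ᵇ ℝ≥0 := BoundedContinuousFunction.mkOfCompact ⟨_, hc⟩
  have key : ∀ Λ : FiniteMeasure (Z × ProbabilityMeasure K),
      ∫⁻ x, f x ∂(bary Λ : Measure K) = ∫⁻ z, g z ∂(Λ : Measure (Z × ProbabilityMeasure K)) := by
    intro Λ
    have hfm := f.continuous.measurable.coe_nnreal_ennreal
    rw [bary_coe, Measure.lintegral_bind (evK K).aemeasurable hfm.aemeasurable, Measure.snd, lintegral_map _ measurable_snd]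
    · refine lintegral_congr fun z => ?_
      exact (ENNReal.coe_toNNReal (hfin z.2)).symm
    · exact hfm.lintegral_kernel
  simp only [key]
  exact h g

lemma fst_tendsto {N : Type*} {u : Filter N} {Λn : N → FiniteMeasure (Z × ProbabilityMeasure K)}
    {Λ : FiniteMeasure (Z × ProbabilityMeasure K)} (h : Tendsto Λn u (𝓝 Λ)) :
    Tendsto (fun n => (Λn n).map Prod.fst) u (𝓝 (Λ.map Prod.fst)) :=
  ((FiniteMeasure.continuous_map continuous_fst).tendsto Λ).comp h

end bary

end helperH

section helperI
open ProbabilityTheory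
section cons
variable {X₁ X₂ K₁ K₂ : Type*}
  [TopologicalSpace X₁] [PolishSpace X₁] [MeasurableSpace X₁] [BorelSpace X₁]
  [TopologicalSpace X₂] [PolishSpace X₂] [MeasurableSpace X₂] [BorelSpace X₂] [Nonempty X₂]
  [TopologicalSpace K₁] [CompactSpace K₁] [TopologicalSpace.MetrizableSpace K₁]
  [SecondCountableTopology K₁] [MeasurableSpace K₁] [BorelSpace K₁]
  [TopologicalSpace K₂] [CompactSpace K₂] [TopologicalSpace.MetrizableSpace K₂]
  [SecondCountableTopology K₂] [MeasurableSpace K₂] [BorelSpace K₂]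

lemma meas_pushck (ι₂ : X₂ → K₂) (h₂ : Continuous ι₂) (γ : Measure (X₁ × X₂)) [IsFiniteMeasure γ] :
    Measurable fun x => pushP ι₂ h₂ (ck γ x) := by
  refine Measurable.subtype_mk ?_
  exact (Measure.measurable_map _ h₂.measurable).comp γ.condKernel.measurable

/-- lifted plan -/
def lam (ι₁ : X₁ → K₁) (ι₂ : X₂ → K₂) (h₂ : Continuous ι₂)
    (γ : Measure (X₁ × X₂)) [IsFiniteMeasure γ] : FiniteMeasure (K₁ × ProbabilityMeasure K₂) :=
  ⟨γ.fst.map (fun x => (ι₁ x, pushP ι₂ h₂ (ck γ x))), inferInstance⟩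

variable (ι₁ : X₁ → K₁) (ι₂ : X₂ → K₂)

lemma lam_meas (h₁ : IsEmbedding ι₁) (h₂ : IsEmbedding ι₂) (γ : Measure (X₁ × X₂)) [IsFiniteMeasure γ] :
    Measurable (fun x => (ι₁ x, pushP ι₂ h₂.continuous (ck γ x))) :=
  h₁.continuous.measurable.prodMk (meas_pushck ι₂ h₂.continuous γ)

lemma lam_fst (h₁ : IsEmbedding ι₁) (h₂ : IsEmbedding ι₂) (γ : Measure (X₁ × X₂)) [IsFiniteMeasure γ] :
    (lam ι₁ ι₂ h₂.continuous γ : Measure (K₁ × ProbabilityMeasure K₂)).fst = γ.fst.map ι₁ := by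
  show ((γ.fst.map (fun x => (ι₁ x, pushP ι₂ h₂.continuous (ck γ x)))).map Prod.fst) = _
  rw [Measure.map_map measurable_fst (lam_meas ι₁ ι₂ h₁ h₂ γ)]
  rfl

lemma lam_bary (h₁ : IsEmbedding ι₁) (h₂ : IsEmbedding ι₂) (γ : Measure (X₁ × X₂)) [IsFiniteMeasure γ] :
    (bary (lam ι₁ ι₂ h₂.continuous γ) : Measure K₂) = γ.snd.map ι₂ := by
  rw [bary_coe]
  have e : (lam ι₁ ι₂ h₂.continuous γ : Measure (K₁ × ProbabilityMeasure K₂)).snd = γ.fst.map (fun x => pushP ι₂ h₂.continuous (ck γ x)) := by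
    show ((γ.fst.map (fun x => (ι₁ x, pushP ι₂ h₂.continuous (ck γ x)))).map Prod.snd) = _
    rw [Measure.map_map measurable_snd (lam_meas ι₁ ι₂ h₁ h₂ γ)]
    rfl
  rw [e]
  ext s hs
  have hm := h₂.continuous.measurable
  rw [Measure.bind_apply hs (evK K₂).aemeasurable, lintegral_map ((evK K₂).measurable_coe hs) (meas_pushck ι₂ h₂.continuous γ),
    Measure.map_apply hm hs]
  have : γ.snd = γ.fst.bind γ.condKernel := by
    rw [← Measure.snd_compProd, Measure.disintegrate]
  rw [this, Measure.bind_apply (hm hs) γ.condKernel.aemeasurable]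
  refine lintegral_congr fun x => ?_
  show ((γ.condKernel x).map ι₂) s = _
  rw [Measure.map_apply hm hs]

lemma lam_lint (h₁ : IsEmbedding ι₁) (h₂ : IsEmbedding ι₂) (γ : Measure (X₁ × X₂)) [IsFiniteMeasure γ] (cb : K₁ × ProbabilityMeasure K₂ → ℝ≥0∞)
    (hcb : Measurable cb) (c : X₁ × ProbabilityMeasure X₂ → ℝ≥0∞)
    (hc : ∀ x p, cb (ι₁ x, pushP ι₂ h₂.continuous p) = c (x, p)) :
    ∫⁻ z, cb z ∂(lam ι₁ ι₂ h₂.continuous γ : Measure (K₁ × ProbabilityMeasure K₂)) = ∫⁻ x, c (x, ck γ x) ∂γ.fst := by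
  show ∫⁻ z, cb z ∂(γ.fst.map (fun x => (ι₁ x, pushP ι₂ h₂.continuous (ck γ x)))) = _
  rw [lintegral_map hcb (lam_meas ι₁ ι₂ h₁ h₂ γ)]
  exact lintegral_congr fun x => hc _ _

lemma lam_meas_c (h₁ : IsEmbedding ι₁) (h₂ : IsEmbedding ι₂) (γ : Measure (X₁ × X₂)) [IsFiniteMeasure γ] (cb : K₁ × ProbabilityMeasure K₂ → ℝ≥0∞)
    (hcb : Measurable cb) (c : X₁ × ProbabilityMeasure X₂ → ℝ≥0∞)
    (hc : ∀ x p, cb (ι₁ x, pushP ι₂ h₂.continuous p) = c (x, p)) :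
    Measurable fun x => c (x, ck γ x) := by
  simp_rw [← hc]
  exact hcb.comp (lam_meas ι₁ ι₂ h₁ h₂ γ)

/-- mixture of probability measures -/
def mixP (p q : ProbabilityMeasure X₂) (t : ℝ) (h0 : 0 ≤ t) (h1 : t ≤ 1) : ProbabilityMeasure X₂ :=
  ⟨ENNReal.ofReal t • (p : Measure X₂) + ENNReal.ofReal (1 - t) • (q : Measure X₂), ⟨by
    simp [← ENNReal.ofReal_add h0 (show 0 ≤ 1 - t by linarith)]⟩⟩

lemma constr (h₁ : IsEmbedding ι₁) (h₂ : IsEmbedding ι₂) (F₁ F₂ : EntropyFn) (hF₁ : F₁.Superlinear) (hF₂ : F₂.Superlinear)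
    (μ₁ : Measure X₁) (μ₂ : Measure X₂) [IsFiniteMeasure μ₁] [IsFiniteMeasure μ₂]
    (cb : K₁ × ProbabilityMeasure K₂ → ℝ≥0∞) (hcb : LowerSemicontinuous cb)
    (c : X₁ × ProbabilityMeasure X₂ → ℝ≥0∞)
    (hc : ∀ x p, cb (ι₁ x, pushP ι₂ h₂.continuous p) = c (x, p))
    (hconv : ∀ (x : X₁) (p q m : ProbabilityMeasure X₂) (t : ℝ), 0 ≤ t → t ≤ 1 →
      (m : Measure X₂) = ENNReal.ofReal t • (p : Measure X₂)
          + ENNReal.ofReal (1 - t) • (q : Measure X₂) →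
      c (x, m) ≤ ENNReal.ofReal t * c (x, p) + ENNReal.ofReal (1 - t) * c (x, q))
    (Λ : FiniteMeasure (K₁ × ProbabilityMeasure K₂))
    (hE₁ : entF F₁ (Λ : Measure (K₁ × ProbabilityMeasure K₂)).fst (μ₁.map ι₁) ≠ ∞)
    (hE₂ : entF F₂ (bary Λ : Measure K₂) (μ₂.map ι₂) ≠ ∞) :
    ∃ (γ : Measure (X₁ × X₂)) (_ : IsFiniteMeasure γ),
      entF F₁ γ.fst μ₁ = entF F₁ (Λ : Measure (K₁ × ProbabilityMeasure K₂)).fst (μ₁.map ι₁) ∧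
      entF F₂ γ.snd μ₂ = entF F₂ (bary Λ : Measure K₂) (μ₂.map ι₂) ∧
      ∫⁻ x, c (x, ck γ x) ∂γ.fst ≤ ∫⁻ z, cb z ∂(Λ : Measure (K₁ × ProbabilityMeasure K₂)) ∧
      γ univ = (Λ : Measure (K₁ × ProbabilityMeasure K₂)) univ := by
  have m₁ : MeasurableEmbedding ι₁ := h₁.continuous.measurableEmbedding h₁.injective
  have m₂ : MeasurableEmbedding ι₂ := h₂.continuous.measurableEmbedding h₂.injective
  have hcbm : Measurable cb := hcb.measurable
  haveI : Nonempty K₂ := ‹Nonempty X₂›.map ι₂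
  haveI : Inhabited K₂ := Classical.inhabited_of_nonempty inferInstance
  obtain ⟨Λ, hΛf⟩ := Λ
  have hbar : (bary ⟨Λ, hΛf⟩ : Measure K₂) = Λ.snd.bind (evK K₂) := rfl
  simp only [FiniteMeasure.toMeasure_mk, hbar] at *
  set κ := Λ.condKernel with hκ
  set η : Kernel K₁ K₂ := evK K₂ ∘ₖ κ with hη
  set γt := Λ.fst ⊗ₘ η with hγt
  have hdis : Λ.fst ⊗ₘ κ = Λ := Measure.disintegrate _ _
  have ht1 : γt.fst = Λ.fst := Measure.fst_compProd _ _
  have ht2 : γt.snd = Λ.snd.bind (evK K₂) := by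
    rw [hγt, Measure.snd_compProd, hη, ← Measure.comp_assoc, ← Measure.snd_compProd Λ.fst κ, hdis]
  have hr1 : Λ.fst (range ι₁)ᶜ = 0 := by
    refine (F₁.ac_of_entF hF₁ _ _ hE₁) ?_
    rw [Measure.map_apply m₁.measurable m₁.measurableSet_range.compl]
    simp
  have hr2 : (Λ.snd.bind (evK K₂)) (range ι₂)ᶜ = 0 := by
    refine (F₂.ac_of_entF hF₂ _ _ hE₂) ?_
    rw [Measure.map_apply m₂.measurable m₂.measurableSet_range.compl]
    simp
  set γ := γt.comap (Prod.map ι₁ ι₂) with hγ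
  have hmap : γ.map (Prod.map ι₁ ι₂) = γt := by
    rw [hγ, (m₁.prodMap m₂).map_comap, Measure.restrict_eq_self_of_ae_mem]
    have a1 : ∀ᵐ z ∂γt, z.1 ∈ range ι₁ := by
      refine ae_of_ae_map (f := Prod.fst) (p := fun z => z ∈ range ι₁) measurable_fst.aemeasurable ?_
      show ∀ᵐ y ∂γt.fst, _
      rw [ht1]; exact hr1
    have a2 : ∀ᵐ z ∂γt, z.2 ∈ range ι₂ := by
      refine ae_of_ae_map (f := Prod.snd) (p := fun z => z ∈ range ι₂) measurable_snd.aemeasurable ?_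
      show ∀ᵐ y ∂γt.snd, _
      rw [ht2]; exact hr2
    filter_upwards [a1, a2] with z hz1 hz2
    rw [range_prodMap]; exact ⟨hz1, hz2⟩
  have hf1 : γ.fst.map ι₁ = Λ.fst := by
    rw [← ht1, ← hmap, Measure.fst, Measure.fst, Measure.map_map m₁.measurable measurable_fst,
      Measure.map_map measurable_fst (m₁.prodMap m₂).measurable]
    rfl
  have hf2 : γ.snd.map ι₂ = Λ.snd.bind (evK K₂) := by
    rw [← ht2, ← hmap, Measure.snd, Measure.snd, Measure.map_map m₂.measurable measurable_snd,
      Measure.map_map measurable_snd (m₁.prodMap m₂).measurable]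
    rfl
  refine ⟨γ, inferInstance, ?_, ?_, ?_, ?_⟩
  · rw [← hf1, F₁.entF_map hF₁ m₁]
  · rw [← hf2, F₂.entF_map hF₂ m₂]
  · -- kernel identification
    have hker : ∀ᵐ x ∂γ.fst, (γ.condKernel x).map ι₂ = η (ι₁ x) := by
      have : γ.fst ⊗ₘ (γ.condKernel.map ι₂) = γ.fst ⊗ₘ (η.comap ι₁ m₁.measurable) := by
        have mi : MeasurableEmbedding (Prod.map ι₁ (id : K₂ → K₂)) := m₁.prodMap MeasurableEmbedding.id
        rw [← mi.comap_map (γ.fst ⊗ₘ (γ.condKernel.map ι₂)), ← mi.comap_map (γ.fst ⊗ₘ (η.comap ι₁ m₁.measurable))]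
        congr 1
        rw [Measure.compProd_map m₂.measurable, Measure.disintegrate,
          Measure.map_map mi.measurable (measurable_id.prodMap m₂.measurable)]
        trans γt
        · rw [← hmap]; rfl
        · ext s hs
          rw [Measure.map_apply mi.measurable hs, Measure.compProd_apply (mi.measurable hs), hγt,
            Measure.compProd_apply hs, ← hf1, lintegral_map (Kernel.measurable_kernel_prodMk_left hs) m₁.measurable]
          rfl
      filter_upwards [Kernel.ae_eq_of_compProd_eq this] with x hx
      rw [Kernel.map_apply _ m₂.measurable, Kernel.comap_apply] at hx
      exact hx
    have hB : ∀ᵐ z ∂Λ.fst, ∀ᵐ p : ProbabilityMeasure K₂ ∂(κ z), (p : Measure K₂) (range ι₂)ᶜ = 0 := by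
      have : ∀ᵐ w ∂Λ, (w.2 : Measure K₂) (range ι₂)ᶜ = 0 := by
        rw [Measure.bind_apply m₂.measurableSet_range.compl (evK K₂).aemeasurable,
          lintegral_eq_zero_iff ((evK K₂).measurable_coe m₂.measurableSet_range.compl)] at hr2
        exact ae_of_ae_map (f := Prod.snd) measurable_snd.aemeasurable hr2
      rw [← hdis] at this
      exact Measure.ae_ae_of_ae_compProd this
    rw [← hf1] at hB
    have hB' := ae_of_ae_map m₁.measurable.aemeasurable hB
    have hJ : ∀ᵐ x ∂γ.fst, c (x, ck γ x) ≤ ∫⁻ p, cb (ι₁ x, p) ∂(κ (ι₁ x)) := by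
      filter_upwards [hker, hB'] with x hx hxB
      rw [← hc]
      refine jensen (κ (ι₁ x)) (range (pushP ι₂ h₂.continuous)) (fun p => cb (ι₁ x, p))
        (hcbm.comp measurable_prodMk_left) ?_ ?_ _ ?_ ?_
      · rintro _ ⟨p, rfl⟩ _ ⟨q, rfl⟩ t ht0 ht1
        refine ⟨_, ⟨mixP p q t ht0 ht1, rfl⟩, ?_, ?_⟩
        · simp only [pushP_coe]
          show Measure.map ι₂ (ENNReal.ofReal t • (p : Measure X₂) + ENNReal.ofReal (1 - t) • (q : Measure X₂)) = _
          rw [Measure.map_add _ _ m₂.measurable, Measure.map_smul, Measure.map_smul]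
        · simp only [hc]
          exact hconv x p q _ t ht0 ht1 rfl
      · filter_upwards [hxB] with p hp
        have hpe : ((p : Measure K₂).comap ι₂).map ι₂ = p := by
          rw [m₂.map_comap, Measure.restrict_eq_self_of_ae_mem]
          exact hp
        refine ⟨⟨(p : Measure K₂).comap ι₂, ⟨?_⟩⟩, ?_⟩
        · have : (((p : Measure K₂).comap ι₂).map ι₂) univ = 1 := by rw [hpe]; simp
          rwa [Measure.map_apply m₂.measurable MeasurableSet.univ, preimage_univ] at this
        · exact Subtype.ext hpe
      · intro f
        have e : (pushP ι₂ h₂.continuous (ck γ x) : Measure K₂) = η (ι₁ x) := hx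
        rw [e, hη, Kernel.integral_comp]
        · rfl
        · exact f.integrable _
      · exact (hcb.comp (Continuous.prodMk_right (ι₁ x))) _
    refine (lintegral_mono_ae hJ).trans ?_
    have hmz : Measurable fun z => ∫⁻ p, cb (z, p) ∂(κ z) := hcbm.lintegral_kernel_prod_right'
    rw [← lintegral_map hmz m₁.measurable, hf1, ← Measure.lintegral_compProd hcbm, hdis]
  · have : (γ.fst.map ι₁) univ = Λ.fst univ := by rw [hf1]
    rw [Measure.map_apply m₁.measurable MeasurableSet.univ, preimage_univ, Measure.fst_apply MeasurableSet.univ,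
      Measure.fst_apply MeasurableSet.univ] at this
    exact this

end cons

end helperI

section helperJ
open ProbabilityTheory
lemma shiftC_lsc {X P : Type*} [TopologicalSpace X] [TopologicalSpace P] (C : X → P → EReal)
    (hC : LowerSemicontinuous fun q : X × P => C q.1 q.2) (k : ℝ≥0) :
    LowerSemicontinuous (shiftC C k) := by
  have hc : Continuous fun a : EReal => (a + ((k:ℝ) : EReal)).toENNReal := by
    refine EReal.continuous_toENNReal.comp (continuous_iff_continuousAt.2 fun a => ?_)
    exact ContinuousAt.comp (g := fun p : EReal × EReal => p.1 + p.2) (f := fun a => (a, ((k:ℝ):EReal)))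
      (EReal.continuousAt_add (Or.inr (EReal.coe_ne_bot _)) (Or.inr (EReal.coe_ne_top _)))
      (Continuous.prodMk_left _).continuousAt
  exact hc.comp_lowerSemicontinuous hC fun a b hab =>
    EReal.toENNReal_le_toENNReal (add_le_add_left hab _)

lemma shift_conv (k : ℝ≥0) (a b m : EReal) (t : ℝ) (h0 : 0 ≤ t) (h1 : t ≤ 1)
    (ha : ((-(k:ℝ) : ℝ) : EReal) ≤ a) (hb : ((-(k:ℝ) : ℝ) : EReal) ≤ b)
    (hm : m ≤ (t : EReal) * a + ((1 - t : ℝ) : EReal) * b) :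
    (m + ((k:ℝ):EReal)).toENNReal ≤ ENNReal.ofReal t * (a + ((k:ℝ):EReal)).toENNReal
      + ENNReal.ofReal (1 - t) * (b + ((k:ℝ):EReal)).toENNReal := by
  rcases h0.eq_or_lt with rfl | h0
  · simp at hm ⊢
    exact EReal.toENNReal_le_toENNReal (add_le_add_left hm _)
  rcases h1.eq_or_lt with rfl | h1
  · simp at hm ⊢
    exact EReal.toENNReal_le_toENNReal (add_le_add_left hm _)
  have h1' : 0 < 1 - t := by linarith
  induction a with
  | bot => simp at ha
  | top =>
    simp only [EReal.top_add_coe, EReal.toENNReal_top]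
    rw [ENNReal.mul_top (by simpa using h0), top_add]; exact le_top
  | coe a =>
    induction b with
    | bot => simp at hb
    | top =>
      simp only [EReal.top_add_coe, EReal.toENNReal_top]
      rw [ENNReal.mul_top (by simpa using h1), add_top]; exact le_top
    | coe b =>
      rw [EReal.coe_le_coe_iff] at ha hb
      rw [← EReal.coe_mul, ← EReal.coe_mul, ← EReal.coe_add] at hm
      refine (EReal.toENNReal_le_toENNReal (add_le_add_left hm _)).trans ?_
      simp only [← EReal.coe_add]
      simp only [EReal.toENNReal_of_ne_top (EReal.coe_ne_top _), EReal.toReal_coe]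
      rw [← ENNReal.ofReal_mul h0.le, ← ENNReal.ofReal_mul h1'.le, ← ENNReal.ofReal_add
        (mul_nonneg h0.le (by linarith)) (mul_nonneg h1'.le (by linarith))]
      apply ENNReal.ofReal_le_ofReal
      linarith

lemma mass_bound {X : Type*} [MeasurableSpace X] (F : EntropyFn) (hF : F.Superlinear)
    (γ μ : Measure X) [IsFiniteMeasure γ] [IsFiniteMeasure μ] (k : ℝ≥0) (M : ℝ)
    (h : entF F γ μ ≤ ENNReal.ofReal (M + k * γ.real univ)) (h0 : 0 ≤ M + k * γ.real univ) :
    γ.real univ ≤ M + F.conj (k + 1) * μ.real univ := by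
  have := (F.P6 hF γ μ (fun _ => (k:ℝ) + 1) measurable_const _ (fun _ => le_rfl)).trans h
  rw [ENNReal.ofReal_le_ofReal_iff h0] at this
  simp only [integral_const, smul_eq_mul] at this
  linarith

lemma ultra_lim {α : Type*} [TopologicalSpace α] [CompactSpace α] {N : Type*} (u : Ultrafilter N) (f : N → α) :
    ∃ a, Tendsto f u (𝓝 a) := by
  obtain ⟨a, -, ha⟩ := isCompact_univ.ultrafilter_le_nhds (u.map f) (by simp)
  exact ⟨a, ha⟩

section main
variable {X₁ X₂ K₁ K₂ : Type*}
  [TopologicalSpace X₁] [PolishSpace X₁] [MeasurableSpace X₁] [BorelSpace X₁]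
  [TopologicalSpace X₂] [PolishSpace X₂] [MeasurableSpace X₂] [BorelSpace X₂] [Nonempty X₂]
  [TopologicalSpace K₁] [CompactSpace K₁] [TopologicalSpace.MetrizableSpace K₁]
  [SecondCountableTopology K₁] [MeasurableSpace K₁] [BorelSpace K₁]
  [TopologicalSpace K₂] [CompactSpace K₂] [TopologicalSpace.MetrizableSpace K₂]
  [SecondCountableTopology K₂] [MeasurableSpace K₂] [BorelSpace K₂]

lemma main_aux (ι₁ : X₁ → K₁) (ι₂ : X₂ → K₂) (hι₁ : IsEmbedding ι₁) (hι₂ : IsEmbedding ι₂)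
    (C : X₁ → ProbabilityMeasure X₂ → EReal)
    (hClsc : LowerSemicontinuous fun q : X₁ × ProbabilityMeasure X₂ => C q.1 q.2)
    (hCbdd : ∃ K : ℝ, ∀ x p, (K : EReal) ≤ C x p)
    (hCconv : ∀ (x : X₁) (p q m : ProbabilityMeasure X₂) (t : ℝ), 0 ≤ t → t ≤ 1 →
      (m : Measure X₂) = ENNReal.ofReal t • (p : Measure X₂)
          + ENNReal.ofReal (1 - t) • (q : Measure X₂) →
      C x m ≤ (t : EReal) * C x p + ((1 - t : ℝ) : EReal) * C x q)
    (F₁ F₂ : EntropyFn) (hF₁ : F₁.Superlinear) (hF₂ : F₂.Superlinear)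
    (μ₁ : FiniteMeasure X₁) (μ₂ : FiniteMeasure X₂)
    (μ₁n : ℕ → FiniteMeasure X₁) (μ₂n : ℕ → FiniteMeasure X₂)
    (h₁ : Filter.Tendsto μ₁n Filter.atTop (nhds μ₁))
    (h₂ : Filter.Tendsto μ₂n Filter.atTop (nhds μ₂)) :
    wOpt C F₁ F₂ (μ₁ : Measure X₁) (μ₂ : Measure X₂)
      ≤ Filter.liminf
          (fun n => wOpt C F₁ F₂ (μ₁n n : Measure X₁) (μ₂n n : Measure X₂))
          Filter.atTop := by
  obtain ⟨K, hK⟩ := hCbdd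
  obtain ⟨k, hk⟩ : ∃ k : ℝ≥0, ∀ x p, ((-(k:ℝ) : ℝ) : EReal) ≤ C x p := by
    refine ⟨‖K‖₊, fun x p => le_trans ?_ (hK x p)⟩
    rw [EReal.coe_le_coe_iff, coe_nnnorm, Real.norm_eq_abs]
    exact neg_abs_le K
  obtain ⟨cb, hcb, hcbe⟩ := lsc_ext (Prod.map ι₁ (pushP ι₂ hι₂.continuous))
    (hι₁.isInducing.prodMap (pushP_inducing ι₂ hι₂)) (shiftC C k) (shiftC_lsc C hClsc k)
  have hc : ∀ x p, cb (ι₁ x, pushP ι₂ hι₂.continuous p) = shiftC C k (x, p) := fun x p => hcbe (x, p)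
  have hcbm : Measurable cb := hcb.measurable
  rw [← EReal.le_of_forall_lt_iff_le]
  intro M hM
  haveI hfr := frequently_iff_neBot.1 (frequently_lt_of_liminf_lt (by isBoundedDefault) hM)
  let u : Ultrafilter ℕ := Ultrafilter.of (atTop ⊓ 𝓟 {n | wOpt C F₁ F₂ (μ₁n n : Measure X₁) (μ₂n n : Measure X₂) < (M : EReal)})
  have hu : (u : Filter ℕ) ≤ _ := Ultrafilter.of_le (atTop ⊓ 𝓟 {n | wOpt C F₁ F₂ (μ₁n n : Measure X₁) (μ₂n n : Measure X₂) < (M : EReal)})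
  have hu1 : (u : Filter ℕ) ≤ atTop := hu.trans inf_le_left
  have hu2 : ∀ᶠ n in (u : Filter ℕ), wOpt C F₁ F₂ (μ₁n n : Measure X₁) (μ₂n n : Measure X₂) < (M : EReal) :=
    (hu.trans inf_le_right) (mem_principal_self _)
  have hch : ∀ n, ∃ γ : FiniteMeasure (X₁ × X₂), wOpt C F₁ F₂ (μ₁n n : Measure X₁) (μ₂n n : Measure X₂) < (M : EReal) →
      wCost C F₁ F₂ (μ₁n n : Measure X₁) (μ₂n n : Measure X₂) γ inferInstance < (M : EReal) := by
    intro n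
    by_cases h : wOpt C F₁ F₂ (μ₁n n : Measure X₁) (μ₂n n : Measure X₂) < (M : EReal)
    · obtain ⟨e, ⟨γ, hγ, rfl⟩, he⟩ := sInf_lt_iff.1 h
      exact ⟨⟨γ, hγ⟩, fun _ => he⟩
    · exact ⟨0, fun h' => absurd h' h⟩
  choose γn hγn using hch
  let Λn : ℕ → FiniteMeasure (K₁ × ProbabilityMeasure K₂) := fun n =>
    lam ι₁ ι₂ hι₂.continuous (γn n : Measure (X₁ × X₂))
  let e1 : ℕ → ℝ≥0∞ := fun n => entF F₁ (γn n : Measure (X₁ × X₂)).fst (μ₁n n : Measure X₁)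
  let e2 : ℕ → ℝ≥0∞ := fun n => entF F₂ (γn n : Measure (X₁ × X₂)).snd (μ₂n n : Measure X₂)
  let e3 : ℕ → ℝ≥0∞ := fun n => ∫⁻ x, shiftC C k (x, ck (γn n : Measure (X₁ × X₂)) x) ∂(γn n : Measure (X₁ × X₂)).fst
  let ms : ℕ → ℝ := fun n => (γn n : Measure (X₁ × X₂)).real univ
  have hT : ∀ᶠ n in (u : Filter ℕ), e1 n + e2 n + e3 n ≤ ENNReal.ofReal (M + k * ms n) ∧ 0 ≤ M + k * ms n := by
    filter_upwards [hu2] with n hn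
    have := hγn n hn
    rw [wCost_eq C F₁ F₂ _ _ k hk _ (lam_meas_c ι₁ ι₂ hι₁ hι₂ _ cb hcbm _ hc)] at this
    exact ennreal_sub_lt this
  have hmass : ∀ n, ((Λn n).mass : ℝ) = ms n := by
    intro n
    have : (Λn n : Measure (K₁ × ProbabilityMeasure K₂)) univ = (γn n : Measure (X₁ × X₂)) univ := by
      rw [← Measure.fst_univ, lam_fst ι₁ ι₂ hι₁ hι₂, Measure.map_apply hι₁.continuous.measurable MeasurableSet.univ,
        preimage_univ, Measure.fst_univ]
    show ((Λn n : Measure (K₁ × ProbabilityMeasure K₂)) univ).toReal = _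
    rw [this]; rfl
  have hmb : ∀ᶠ n in (u : Filter ℕ), (Λn n).mass ≤ (M + |F₁.conj (k + 1)| * (μ₁.mass + 1)).toNNReal := by
    have hμm : ∀ᶠ n in (u : Filter ℕ), ((μ₁n n).mass : ℝ) < μ₁.mass + 1 := by
      have h := (NNReal.continuous_coe.comp (FiniteMeasure.continuous_mass (Ω := X₁))).tendsto μ₁ |>.comp (h₁.mono_left hu1)
      exact h.eventually (gt_mem_nhds (by simp))
    filter_upwards [hT, hμm] with n hn hn2
    have hms : (γn n : Measure (X₁ × X₂)).fst.real univ = ms n := by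
      simp only [ms, measureReal_def, Measure.fst_univ]
    have := mass_bound F₁ hF₁ (γn n : Measure (X₁ × X₂)).fst (μ₁n n : Measure X₁) k M
      (by rw [hms]; exact (le_self_add.trans le_self_add).trans hn.1) (by rw [hms]; exact hn.2)
    rw [hms] at this
    apply NNReal.le_toNNReal_of_coe_le
    rw [hmass]
    refine this.trans (add_le_add le_rfl ?_)
    have hmm : (μ₁n n : Measure X₁).real univ = (μ₁n n).mass := rfl
    rw [hmm]
    exact mul_le_mul (le_abs_self _) hn2.le (NNReal.coe_nonneg _) (abs_nonneg _)
  obtain ⟨Λ, -, hΛ⟩ := (isCompact_setOfPred_finiteMeasure_le_of_compactSpace (K₁ × ProbabilityMeasure K₂) _).ultrafilter_le_nhds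
    (u.map Λn) (le_principal_iff.2 hmb)
  have hΛ : Tendsto Λn u (𝓝 Λ) := hΛ
  obtain ⟨E1, hE1⟩ := ultra_lim u e1
  obtain ⟨E2, hE2⟩ := ultra_lim u e2
  obtain ⟨E3, hE3⟩ := ultra_lim u e3
  have hms : Tendsto ms u (𝓝 (Λ.mass : ℝ)) := by
    have h := (NNReal.continuous_coe.comp (FiniteMeasure.continuous_mass (Ω := K₁ × ProbabilityMeasure K₂))).tendsto Λ |>.comp hΛ
    exact h.congr fun n => hmass n
  have hMk : Tendsto (fun n => M + k * ms n) u (𝓝 (M + k * Λ.mass)) := tendsto_const_nhds.add (tendsto_const_nhds.mul hms)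
  have hle0 : 0 ≤ M + k * (Λ.mass : ℝ) := ge_of_tendsto hMk (hT.mono fun n hn => hn.2)
  have hle : E1 + E2 + E3 ≤ ENNReal.ofReal (M + k * Λ.mass) :=
    le_of_tendsto_of_tendsto ((hE1.add hE2).add hE3) (ENNReal.tendsto_ofReal hMk) (hT.mono fun n hn => hn.1)
  have mι₁ : MeasurableEmbedding ι₁ := hι₁.continuous.measurableEmbedding hι₁.injective
  have mι₂ : MeasurableEmbedding ι₂ := hι₂.continuous.measurableEmbedding hι₂.injective
  have L1 : entF F₁ (Λ : Measure (K₁ × ProbabilityMeasure K₂)).fst ((μ₁ : Measure X₁).map ι₁) ≤ E1 := by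
    refine entF_lsc F₁ hF₁ (fst_tendsto hΛ)
      (((FiniteMeasure.continuous_map hι₁.continuous).tendsto μ₁).comp (h₁.mono_left hu1)) (hE1.congr fun n => ?_)
    show _ = entF F₁ (Λn n : Measure (K₁ × ProbabilityMeasure K₂)).fst ((μ₁n n : Measure X₁).map ι₁)
    rw [lam_fst ι₁ ι₂ hι₁ hι₂, F₁.entF_map hF₁ mι₁]
  have L2 : entF F₂ (bary Λ : Measure K₂) ((μ₂ : Measure X₂).map ι₂) ≤ E2 := by
    refine entF_lsc F₂ hF₂ (bary_tendsto hΛ)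
      (((FiniteMeasure.continuous_map hι₂.continuous).tendsto μ₂).comp (h₂.mono_left hu1)) (hE2.congr fun n => ?_)
    show _ = entF F₂ (bary (Λn n) : Measure K₂) ((μ₂n n : Measure X₂).map ι₂)
    rw [lam_bary ι₁ ι₂ hι₁ hι₂, F₂.entF_map hF₂ mι₂]
  have L3 : ∫⁻ z, cb z ∂(Λ : Measure (K₁ × ProbabilityMeasure K₂)) ≤ E3 :=
    lsc_lintegral_le cb hcb hΛ (hE3.congr fun n => (lam_lint ι₁ ι₂ hι₁ hι₂ _ cb hcbm _ hc).symm)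
  have hfin : E1 + E2 + E3 ≠ ∞ := ne_top_of_le_ne_top ENNReal.ofReal_ne_top hle
  simp only [ne_eq, ENNReal.add_eq_top, not_or] at hfin
  obtain ⟨γ, hγ, g1, g2, g3, g4⟩ := constr ι₁ ι₂ hι₁ hι₂ F₁ F₂ hF₁ hF₂ μ₁ μ₂ cb hcb (shiftC C k) hc
    (fun x p q m t ht0 ht1 hm => shift_conv k _ _ _ t ht0 ht1 (hk _ _) (hk _ _) (hCconv x p q m t ht0 ht1 hm))
    Λ (ne_top_of_le_ne_top hfin.1.1 L1) (ne_top_of_le_ne_top hfin.1.2 L2)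
  refine le_trans (sInf_le ⟨γ, hγ, rfl⟩) ?_
  rw [wCost_eq C F₁ F₂ _ _ k hk _ (lam_meas_c ι₁ ι₂ hι₁ hι₂ _ cb hcbm _ hc)]
  have g5 : γ.real univ = Λ.mass := by rw [measureReal_def, g4]; rfl
  rw [g5]
  refine ennreal_sub_le (le_trans ?_ hle) hle0
  rw [g1, g2]
  exact add_le_add (add_le_add L1 L2) (g3.trans L3)

end main

end helperJ

theorem stmt10
    {X₁ : Type*} [MetricSpace X₁] [PolishSpace X₁] [MeasurableSpace X₁] [BorelSpace X₁]
    {X₂ : Type*} [MetricSpace X₂] [PolishSpace X₂] [MeasurableSpace X₂] [BorelSpace X₂]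
    [Nonempty X₂]
    (C : X₁ → ProbabilityMeasure X₂ → EReal)
    (hClsc : LowerSemicontinuous fun q : X₁ × ProbabilityMeasure X₂ => C q.1 q.2)
    (hCbdd : ∃ K : ℝ, ∀ x p, (K : EReal) ≤ C x p)
    (hCconv : ∀ (x : X₁) (p q m : ProbabilityMeasure X₂) (t : ℝ), 0 ≤ t → t ≤ 1 →
      (m : Measure X₂) = ENNReal.ofReal t • (p : Measure X₂)
          + ENNReal.ofReal (1 - t) • (q : Measure X₂) →
      C x m ≤ (t : EReal) * C x p + ((1 - t : ℝ) : EReal) * C x q)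
    (F₁ F₂ : EntropyFn) (hF₁ : F₁.Superlinear) (hF₂ : F₂.Superlinear)
    (μ₁ : FiniteMeasure X₁) (μ₂ : FiniteMeasure X₂)
    (μ₁n : ℕ → FiniteMeasure X₁) (μ₂n : ℕ → FiniteMeasure X₂)
    (h₁ : Filter.Tendsto μ₁n Filter.atTop (nhds μ₁))
    (h₂ : Filter.Tendsto μ₂n Filter.atTop (nhds μ₂)) :
    wOpt C F₁ F₂ (μ₁ : Measure X₁) (μ₂ : Measure X₂)
      ≤ Filter.liminf
          (fun n => wOpt C F₁ F₂ (μ₁n n : Measure X₁) (μ₂n n : Measure X₂))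
          Filter.atTop := by
  obtain ⟨ι₁, hι₁⟩ := Metric.PiNatEmbed.exists_embedding_to_hilbert_cube (X := X₁)
  obtain ⟨ι₂, hι₂⟩ := Metric.PiNatEmbed.exists_embedding_to_hilbert_cube (X := X₂)
  exact main_aux ι₁ ι₂ hι₁ hι₂ C hClsc hCbdd hCconv F₁ F₂ hF₁ hF₂ μ₁ μ₂ μ₁n μ₂n h₁ h₂
end
end
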